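/- arXiv:1012.1513 — 7 statements merged into one kernel-verified Lean document; each statement's English description precedes it below -/
import Mathlib

section
/- Let p(a,b|x,y) (a,b,x,y ∈ {0,1}) arise from a local hidden-variable model with finite shared randomness: there is a finite index set Λ, weights q(λ) ≥ 0 with ∑_λ q(λ) = 1, and local response probabilities α_λ(a|x) ∈ [0,1] with α_λ(0|x)+α_λ(1|x)=1 and β_λ(b|y) ∈ [0,1] with β_λ(0|y)+β_λ(1|y)=1, such that p(a,b|x,y) = ∑_λ q(λ)·α_λ(a|x)·β_λ(b|y). Then for every τ ≥ 1, the tilted-CH value satisfies S^(τ)(p) ≤ 0. -/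
/-- The tilted-CH value `S^(τ)(p)` of a family of conditional probabilities
`p a b x y = p(a,b|x,y)` with `a, b, x, y ∈ {0,1}`. -/
noncomputable def tiltedCHval (τ : ℝ) (p : Fin 2 → Fin 2 → Fin 2 → Fin 2 → ℝ) : ℝ :=
  p 0 0 0 0 + (1 - τ) * p 0 0 0 1 - τ * p 0 1 0 1
    + (1 - τ) * p 0 0 1 0 - τ * p 1 0 1 0 - p 0 0 1 1

/-!
At `τ = 1` and for a fixed hidden variable the claim is the Hardy form
`p(0,0|0,0) ≤ p(0,1|0,1) + p(1,0|1,0) + p(0,0|1,1)` of the CH inequality. Draw the outcomes for all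
settings at once from the local responses: whenever the settings `0` give `(0, 0)`, the settings `1`
give `(·, 1)`, `(1, 0)` or `(0, 0)`, and each case is paid for by one term on the right. Raising `τ`
only subtracts nonnegative marginals, and linearity in `p` extends the bound to mixtures.
-/

theorem isLinearMap_tiltedCHval (τ : ℝ) : IsLinearMap ℝ (tiltedCHval τ) where
  map_add p p' := by
    simp only [tiltedCHval, Pi.add_apply]
    ring
  map_smul c p := by
    simp only [tiltedCHval, Pi.smul_apply, smul_eq_mul]
    ring

theorem tiltedCHval_sum_smul_nonpos {ι : Type*} {s : Finset ι} {w : ι → ℝ}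
    {P : ι → Fin 2 → Fin 2 → Fin 2 → Fin 2 → ℝ} {τ : ℝ} (hw : ∀ i ∈ s, 0 ≤ w i)
    (hP : ∀ i ∈ s, tiltedCHval τ (P i) ≤ 0) :
    tiltedCHval τ (∑ i ∈ s, w i • P i) ≤ 0 :=
  calc
    tiltedCHval τ (∑ i ∈ s, w i • P i)
    _ = ∑ i ∈ s, tiltedCHval τ (w i • P i) := map_sum (isLinearMap_tiltedCHval τ).mk' _ s
    _ = ∑ i ∈ s, w i * tiltedCHval τ (P i) :=
      Finset.sum_congr rfl fun i _ => (isLinearMap_tiltedCHval τ).map_smul (w i) (P i)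
    _ ≤ 0 := Finset.sum_nonpos fun i hi => mul_nonpos_of_nonneg_of_nonpos (hw i hi) (hP i hi)

theorem tiltedCHval_eq_sub_mul (τ : ℝ) (p : Fin 2 → Fin 2 → Fin 2 → Fin 2 → ℝ) :
    tiltedCHval τ p = p 0 0 0 0 + p 0 0 0 1 + p 0 0 1 0 - p 0 0 1 1
      - τ * ((p 0 0 0 1 + p 0 1 0 1) + (p 0 0 1 0 + p 1 0 1 0)) := by
  unfold tiltedCHval
  ring

theorem antitone_tiltedCHval {p : Fin 2 → Fin 2 → Fin 2 → Fin 2 → ℝ}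
    (hp : ∀ a b x y, 0 ≤ p a b x y) : Antitone fun τ => tiltedCHval τ p := by
  intro τ τ' hτ
  have hmarginals : 0 ≤ (p 0 0 0 1 + p 0 1 0 1) + (p 0 0 1 0 + p 1 0 1 0) :=
    add_nonneg (add_nonneg (hp ..) (hp ..)) (add_nonneg (hp ..) (hp ..))
  simp only [tiltedCHval_eq_sub_mul]
  gcongr

theorem mul_le_mul_add_mul_add_mul_of_add_eq_one {R : Type*} [CommSemiring R] [PartialOrder R]
    [IsOrderedRing R] {a b c₀ c₁ d₀ d₁ : R} (ha₀ : 0 ≤ a) (ha₁ : a ≤ 1) (hb₀ : 0 ≤ b) (hb₁ : b ≤ 1)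
    (hc₀ : 0 ≤ c₀) (hc₁ : 0 ≤ c₁) (hc : c₀ + c₁ = 1)
    (hd₀ : 0 ≤ d₀) (hd₁ : 0 ≤ d₁) (hd : d₀ + d₁ = 1) :
    a * b ≤ a * d₁ + c₁ * b + c₀ * d₀ := by
  have hd₀_le : d₀ ≤ 1 := hd ▸ le_add_of_nonneg_right hd₁
  calc
    a * b = a * b * (d₁ + (c₀ + c₁) * d₀) := by rw [hc, one_mul, add_comm d₁, hd, mul_one]
    _ = a * d₁ * b + c₁ * b * (a * d₀) + c₀ * d₀ * (a * b) := by ring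
    _ ≤ a * d₁ + c₁ * b + c₀ * d₀ := by
      refine add_le_add (add_le_add ?_ ?_) ?_
      · exact mul_le_of_le_one_right (mul_nonneg ha₀ hd₁) hb₁
      · exact mul_le_of_le_one_right (mul_nonneg hc₁ hb₀) (mul_le_one₀ ha₁ hd₀ hd₀_le)
      · exact mul_le_of_le_one_right (mul_nonneg hc₀ hd₀) (mul_le_one₀ ha₁ hb₀ hb₁)

/-- The local response of one party at a fixed value of the hidden variable: `f a x` is the
conditional probability `f(a|x)`, with the outcome before the setting as in `tiltedCHval`. -/
structure IsLocalResponse (f : Fin 2 → Fin 2 → ℝ) : Prop where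
  nonneg : ∀ a x, 0 ≤ f a x
  add_eq_one : ∀ x, f 0 x + f 1 x = 1

theorem IsLocalResponse.le_one {f : Fin 2 → Fin 2 → ℝ} (hf : IsLocalResponse f) (a x : Fin 2) :
    f a x ≤ 1 := by
  rw [← hf.add_eq_one x]
  match a with
  | 0 => exact le_add_of_nonneg_right (hf.nonneg 1 x)
  | 1 => exact le_add_of_nonneg_left (hf.nonneg 0 x)

/-- The family `p(a,b|x,y) = f(a|x) g(b|y)` produced by two parties answering independently, that
is, by a local hidden-variable model at a fixed value of the hidden variable. -/
def productBox (f g : Fin 2 → Fin 2 → ℝ) : Fin 2 → Fin 2 → Fin 2 → Fin 2 → ℝ :=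
  fun a b x y => f a x * g b y

theorem tiltedCHval_one_productBox_nonpos {f g : Fin 2 → Fin 2 → ℝ} (hf : IsLocalResponse f)
    (hg : IsLocalResponse g) : tiltedCHval 1 (productBox f g) ≤ 0 := by
  have hardy : f 0 0 * g 0 0 ≤ f 0 0 * g 1 1 + f 1 1 * g 0 0 + f 0 1 * g 0 1 :=
    mul_le_mul_add_mul_add_mul_of_add_eq_one
      (hf.nonneg 0 0) (hf.le_one 0 0) (hg.nonneg 0 0) (hg.le_one 0 0)
      (hf.nonneg 0 1) (hf.nonneg 1 1) (hf.add_eq_one 1)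
      (hg.nonneg 0 1) (hg.nonneg 1 1) (hg.add_eq_one 1)
  unfold tiltedCHval productBox
  linarith

theorem tiltedCHval_productBox_nonpos {f g : Fin 2 → Fin 2 → ℝ} (hf : IsLocalResponse f)
    (hg : IsLocalResponse g) {τ : ℝ} (hτ : 1 ≤ τ) : tiltedCHval τ (productBox f g) ≤ 0 :=
  calc
    tiltedCHval τ (productBox f g)
    _ ≤ tiltedCHval 1 (productBox f g) :=
      antitone_tiltedCHval (fun a b x y => mul_nonneg (hf.nonneg a x) (hg.nonneg b y)) hτ
    _ ≤ 0 := tiltedCHval_one_productBox_nonpos hf hg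

/-- probabilities arising from a local hidden-variable model with finite
shared randomness satisfy the tilted-CH inequality `S^(τ)(p) ≤ 0` for every `τ ≥ 1`. -/
theorem tiltedCH_le_zero_of_LHV
    (p : Fin 2 → Fin 2 → Fin 2 → Fin 2 → ℝ)
    (Λ : Type) [Fintype Λ]
    (q : Λ → ℝ) (α β : Λ → Fin 2 → Fin 2 → ℝ)
    (hq : ∀ l, 0 ≤ q l) (hqsum : ∑ l, q l = 1)
    (hα0 : ∀ l a x, 0 ≤ α l a x) (hα1 : ∀ l a x, α l a x ≤ 1)
    (hαnorm : ∀ l x, α l 0 x + α l 1 x = 1)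
    (hβ0 : ∀ l b y, 0 ≤ β l b y) (hβ1 : ∀ l b y, β l b y ≤ 1)
    (hβnorm : ∀ l y, β l 0 y + β l 1 y = 1)
    (hp : ∀ a b x y, p a b x y = ∑ l, q l * α l a x * β l b y)
    (τ : ℝ) (hτ : 1 ≤ τ) :
    tiltedCHval τ p ≤ 0 := by
  have hmixture : p = ∑ l, q l • productBox (α l) (β l) := by
    ext a b x y
    simp only [hp, productBox, Finset.sum_apply, Pi.smul_apply, smul_eq_mul, mul_assoc]
  rw [hmixture]
  exact tiltedCHval_sum_smul_nonpos (fun l _ => hq l) fun l _ =>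
    tiltedCHval_productBox_nonpos ⟨hα0 l, hαnorm l⟩ ⟨hβ0 l, hβnorm l⟩ hτ
end

section
/- Let p(a,b|x,y) (a,b,x,y ∈ {0,1}) be any nonnegative conditional probabilities satisfying normalization ∑_{a,b} p(a,b|x,y) = 1 for each (x,y), and the no-signaling conditions: ∑_b p(a,b|x,0) = ∑_b p(a,b|x,1) for all a,x, and ∑_a p(a,b|0,y) = ∑_a p(a,b|1,y) for all b,y. Then for every τ ≥ 3/2, the tilted-CH value satisfies S^(τ)(p) ≤ 0. -/
section TiltedCH

variable (p : Fin 2 → Fin 2 → Fin 2 → Fin 2 → ℝ)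

theorem tiltedCHval_eq_sub_mul_marginals (τ : ℝ) :
    tiltedCHval τ p =
      p 0 0 0 0 + p 0 0 0 1 + p 0 0 1 0 - p 0 0 1 1
        - τ * (∑ b, p 0 b 0 1 + ∑ a, p a 0 1 0) := by
  simp only [tiltedCHval, Fin.sum_univ_two]
  ring

variable {p}

-- `p(0,0|0,0)` is at most each of the two marginals, hence at most their average: this is the
-- `1/2` in the constant `3/2 = 1/2 + 1`.
theorem tiltedCHval_le_mul_marginals (hpos : ∀ a b x y, 0 ≤ p a b x y)
    (hA : ∑ b, p 0 b 0 0 = ∑ b, p 0 b 0 1) (hB : ∑ a, p a 0 0 0 = ∑ a, p a 0 1 0) (τ : ℝ) :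
    tiltedCHval τ p ≤ (3 / 2 - τ) * (∑ b, p 0 b 0 1 + ∑ a, p a 0 1 0) := by
  have le_marginalA (y : Fin 2) : p 0 0 0 y ≤ ∑ b, p 0 b 0 y :=
    Finset.single_le_sum (f := fun b ↦ p 0 b 0 y) (fun b _ ↦ hpos 0 b 0 y) (Finset.mem_univ 0)
  have le_marginalB (x : Fin 2) : p 0 0 x 0 ≤ ∑ a, p a 0 x 0 :=
    Finset.single_le_sum (f := fun a ↦ p a 0 x 0) (fun a _ ↦ hpos a 0 x 0) (Finset.mem_univ 0)
  have le_average : p 0 0 0 0 ≤ (∑ b, p 0 b 0 1 + ∑ a, p a 0 1 0) / 2 := by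
    linarith [(le_marginalA 0).trans_eq hA, (le_marginalB 0).trans_eq hB]
  rw [tiltedCHval_eq_sub_mul_marginals]
  linarith [le_marginalA 1, le_marginalB 1, hpos 0 0 1 1]

theorem tiltedCH_le_zero_of_noSignaling_general (hpos : ∀ a b x y, 0 ≤ p a b x y)
    (hA : ∑ b, p 0 b 0 0 = ∑ b, p 0 b 0 1) (hB : ∑ a, p a 0 0 0 = ∑ a, p a 0 1 0)
    {τ : ℝ} (hτ : 3 / 2 ≤ τ) : tiltedCHval τ p ≤ 0 := by
  have marginals_nonneg : 0 ≤ ∑ b, p 0 b 0 1 + ∑ a, p a 0 1 0 :=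
    add_nonneg (Finset.sum_nonneg fun b _ ↦ hpos 0 b 0 1)
      (Finset.sum_nonneg fun a _ ↦ hpos a 0 1 0)
  exact (tiltedCHval_le_mul_marginals hpos hA hB τ).trans
    (mul_nonpos_of_nonpos_of_nonneg (sub_nonpos.mpr hτ) marginals_nonneg)

end TiltedCH

/-- any nonnegative, normalized, no-signaling family of conditional
probabilities satisfies `S^(τ)(p) ≤ 0` for every `τ ≥ 3/2`. -/
theorem tiltedCH_le_zero_of_noSignaling
    (p : Fin 2 → Fin 2 → Fin 2 → Fin 2 → ℝ)
    (hpos : ∀ a b x y, 0 ≤ p a b x y)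
    (hnorm : ∀ x y, ∑ a, ∑ b, p a b x y = 1)
    (hnsA : ∀ a x, ∑ b, p a b x 0 = ∑ b, p a b x 1)
    (hnsB : ∀ b y, ∑ a, p a b 0 y = ∑ a, p a b 1 y)
    (τ : ℝ) (hτ : 3 / 2 ≤ τ) :
    tiltedCHval τ p ≤ 0 :=
  tiltedCH_le_zero_of_noSignaling_general hpos (hnsA 0 0) (hnsB 0 0) hτ
end

section
/- Define the maximal quantum value S_Q^(τ) = sSup of the set of all real numbers S^(τ)(ρ; A₀,A₁,B₀,B₁), ranging over all dimensions d ≥ 1, all density matrices ρ on ℂ^d⊗ℂ^d, and all POVM elements A₀,A₁,B₀,B₁ on ℂ^d. (Theorem 1: no finite-dimensional maximally entangled state violates I^(τ) maximally.) For every τ with 1/2 + 1/√2 ≤ τ < 3/2, every d ≥ 1, and every choice of POVM elements A₀,A₁,B₀,B₁ on ℂ^d, the value attained by the d-dimensional maximally entangled state is strictly below the quantum maximum: S^(τ)(ρ_d⁺; A₀,A₁,B₀,B₁) < S_Q^(τ). -/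
open Matrix
open scoped Kronecker ComplexOrder

/-- `A` is a POVM element on `ℂ^d`: both `A` and `1 - A` are positive semidefinite. -/
def IsPOVMElem {d : ℕ} (A : Matrix (Fin d) (Fin d) ℂ) : Prop :=
  A.PosSemidef ∧ (1 - A).PosSemidef

/-- `ρ` is a density matrix: positive semidefinite with unit trace. -/
def IsDensityMatrix {n : Type*} [Fintype n] [DecidableEq n]
    (ρ : Matrix n n ℂ) : Prop :=
  ρ.PosSemidef ∧ ρ.trace = 1

/-- The tilted-CH Bell value `S^(τ)(ρ; A₀,A₁,B₀,B₁)`. -/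
noncomputable def tiltedCHBell {d : ℕ} (τ : ℝ)
    (ρ : Matrix (Fin d × Fin d) (Fin d × Fin d) ℂ)
    (A0 A1 B0 B1 : Matrix (Fin d) (Fin d) ℂ) : ℝ :=
  (Matrix.trace (ρ * (A0 ⊗ₖ B0 + A0 ⊗ₖ B1 + A1 ⊗ₖ B0 - A1 ⊗ₖ B1))).re
    - τ * (Matrix.trace (ρ * (A0 ⊗ₖ (1 : Matrix (Fin d) (Fin d) ℂ)))).re
    - τ * (Matrix.trace (ρ * ((1 : Matrix (Fin d) (Fin d) ℂ) ⊗ₖ B0))).re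

/-- The `d`-dimensional maximally entangled state `|Ψ⁺_d⟩` as a vector. -/
noncomputable def maxEntVec (d : ℕ) : Fin d × Fin d → ℂ :=
  fun jk => if jk.1 = jk.2 then (1 / Real.sqrt d : ℂ) else 0

/-- The density matrix `ρ_d⁺ = |Ψ⁺_d⟩⟨Ψ⁺_d|`. -/
noncomputable def maxEntState (d : ℕ) :
    Matrix (Fin d × Fin d) (Fin d × Fin d) ℂ :=
  Matrix.vecMulVec (maxEntVec d) (fun jk => starRingEnd ℂ (maxEntVec d jk))

/-- The two-qubit pure state `|ψ^γ⟩ = cos γ |00⟩ + sin γ |11⟩` as a vector. -/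
noncomputable def schmidtVec (γ : ℝ) : Fin 2 × Fin 2 → ℂ :=
  fun jk =>
    if jk = (0, 0) then (Real.cos γ : ℂ)
    else if jk = (1, 1) then (Real.sin γ : ℂ) else 0

/-- The density matrix `ρ_γ = |ψ^γ⟩⟨ψ^γ|`. -/
noncomputable def schmidtState (γ : ℝ) :
    Matrix (Fin 2 × Fin 2) (Fin 2 × Fin 2) ℂ :=
  Matrix.vecMulVec (schmidtVec γ) (fun jk => starRingEnd ℂ (schmidtVec γ jk))

/-- The set of all tilted-CH Bell values attainable in quantum mechanics
(over all dimensions, density matrices and POVM elements); its supremum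
is the maximal quantum value `S_Q^(τ)`. -/
noncomputable def quantumTiltedCHValues (τ : ℝ) : Set ℝ :=
  { s | ∃ d : ℕ, 1 ≤ d ∧
      ∃ (ρ : Matrix (Fin d × Fin d) (Fin d × Fin d) ℂ)
        (A0 A1 B0 B1 : Matrix (Fin d) (Fin d) ℂ),
        IsDensityMatrix ρ ∧ IsPOVMElem A0 ∧ IsPOVMElem A1 ∧
        IsPOVMElem B0 ∧ IsPOVMElem B1 ∧
        s = tiltedCHBell τ ρ A0 A1 B0 B1 }

/-!
On the maximally entangled state the Bell value is `1/d` times a trace on `ℂ^d`, linear in each of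
Alice's effects, so these may be replaced by projections `P` and `Q`. Since `P + Q - 1` anticommutes
with `X = P - Q`, the eigenvalues of `X` other than `0` and `±1` come in pairs `±l`. This turns the
trace of `(X - κ)⁺` into that of `P ((X - κ)⁺ + (-X - κ)⁺)`, to which the inequality
`|t| ≤ t² / (2s) + s / 2` applies, and so bounds `tr (B X) - κ tr B` for every effect `B` by a
multiple of `tr (P X²)` plus one of `tr P`. With `s = 1/√2` this is used for `B₁` and `P - Q`, and
for `B₀` and `P - (1 - Q)`; as `(P - Q)² + (P + Q - 1)² = 1`, the quadratic terms add up to a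
multiple of `tr P`, and the Bell value is at most `0` once `1/2 + 1/√2 ≤ τ`.

A positive value comes from a Hardy-type configuration of qubit projections on a weakly entangled
state. The probability entering with a minus sign vanishes, both marginals equal `sin² γ`, and the
other three probabilities are `sin² γ`, `sin² γ cos² α` and `sin² γ cos² α`, so the value is
`sin² γ (1 + 2 cos² α - 2 τ)`; for `τ < 3/2` this is positive when `α` is small.
-/

section Idempotent

variable {R : Type*} [Ring R] {p q : R}

theorem add_sub_one_mul_sub_eq_neg (hp : IsIdempotentElem p) (hq : IsIdempotentElem q) :
    (p + q - 1) * (p - q) = -((p - q) * (p + q - 1)) := by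
  simp only [add_mul, sub_mul, mul_add, mul_sub, hp.eq, hq.eq, mul_one, one_mul]
  abel

theorem sub_sq_add_add_sub_one_sq (hp : IsIdempotentElem p) (hq : IsIdempotentElem q) :
    (p - q) ^ 2 + (p + q - 1) ^ 2 = 1 := by
  simp only [sq, add_mul, sub_mul, mul_add, mul_sub, hp.eq, hq.eq, mul_one, one_mul]
  abel

end Idempotent

section Trace

open scoped MatrixOrder

theorem re_trace_mul_nonneg {n : Type*} [Fintype n] {A B : Matrix n n ℂ} (hA : 0 ≤ A) (hB : 0 ≤ B) :
    0 ≤ (A * B).trace.re := by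
  classical
  obtain ⟨L, rfl⟩ := CStarAlgebra.nonneg_iff_eq_star_mul_self.mp hB
  rw [← Matrix.mul_assoc, Matrix.trace_mul_comm, ← Matrix.mul_assoc]
  have hLA := (nonneg_iff_posSemidef.mp hA).mul_mul_conjTranspose_same L
  exact (Complex.le_def.mp hLA.trace_nonneg).1

variable {n : Type*} [DecidableEq n]

theorem re_diag_mem_Icc {B : Matrix n n ℂ} (hB : B ∈ Set.Icc 0 1) (i : n) :
    (B i i).re ∈ Set.Icc 0 1 := by
  have h0 := (Complex.le_def.mp ((nonneg_iff_posSemidef.mp hB.1).diag_nonneg (i := i))).1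
  have h1 := (Complex.le_def.mp ((Matrix.le_iff.mp hB.2).diag_nonneg (i := i))).1
  simp only [Matrix.sub_apply, Matrix.one_apply_eq, Complex.sub_re, Complex.one_re,
    Complex.zero_re] at h0 h1
  exact ⟨h0, by linarith⟩

variable [Fintype n]

theorem exists_starAlgEquiv_eq_diagonal {M : Matrix n n ℂ} (hM : M.IsHermitian) :
    ∃ (φ : Matrix n n ℂ ≃⋆ₐ[ℂ] Matrix n n ℂ) (l : n → ℝ),
      φ M = diagonal (fun i => (l i : ℂ)) ∧ ∀ A, (φ A).trace = A.trace := by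
  refine ⟨Unitary.conjStarAlgAut ℂ _ (star hM.eigenvectorUnitary), hM.eigenvalues,
    hM.conjStarAlgAut_star_eigenvectorUnitary, fun A => ?_⟩
  rw [Unitary.conjStarAlgAut_star_apply, Matrix.trace_mul_cycle,
    Unitary.mul_star_self_of_mem hM.eigenvectorUnitary.2, Matrix.one_mul]

theorem starAlgEquiv_mem_Icc (φ : Matrix n n ℂ ≃⋆ₐ[ℂ] Matrix n n ℂ) {B : Matrix n n ℂ}
    (hB : B ∈ Set.Icc 0 1) : φ B ∈ Set.Icc 0 1 :=
  ⟨map_nonneg φ hB.1, map_one φ ▸ OrderHomClass.mono φ hB.2⟩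

theorem re_trace_mul_diagonal (B : Matrix n n ℂ) (l : n → ℝ) :
    (B * diagonal fun i => (l i : ℂ)).trace.re = ∑ i, (B i i).re * l i := by
  simp [Matrix.trace, Matrix.mul_diagonal]

theorem re_trace_mul_diagonal_le {B : Matrix n n ℂ} (hB : B ∈ Set.Icc 0 1) (l : n → ℝ) :
    (B * diagonal fun i => (l i : ℂ)).trace.re ≤ ∑ i, (l i)⁺ := by
  rw [re_trace_mul_diagonal]
  refine Finset.sum_le_sum fun i _ => ?_
  obtain ⟨h0, h1⟩ := re_diag_mem_Icc hB i
  calc (B i i).re * l i ≤ (B i i).re * (l i)⁺ := by gcongr; exact le_posPart _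
    _ ≤ (l i)⁺ := mul_le_of_le_one_left (posPart_nonneg _) h1

theorem exists_isStarProjection_re_trace_mul_le {M : Matrix n n ℂ} (hM : M.IsHermitian) :
    ∃ P : Matrix n n ℂ, IsStarProjection P ∧
      ∀ B ∈ Set.Icc (0 : Matrix n n ℂ) 1, (B * M).trace.re ≤ (P * M).trace.re := by
  obtain ⟨φ, l, hφM, hφ⟩ := exists_starAlgEquiv_eq_diagonal hM
  let D : Matrix n n ℂ := diagonal fun i => if 0 < l i then 1 else 0
  have hD : IsStarProjection D := by
    constructor
    · simp [IsIdempotentElem, D]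
    · simp [IsSelfAdjoint, D, Matrix.star_eq_conjTranspose, Pi.star_def, apply_ite star]
  refine ⟨φ.symm D, hD.map φ.symm, fun B hB => ?_⟩
  calc (B * M).trace.re = (φ B * diagonal fun i => (l i : ℂ)).trace.re := by
        rw [← hφ, map_mul, hφM]
    _ ≤ ∑ i, (l i)⁺ := re_trace_mul_diagonal_le (starAlgEquiv_mem_Icc φ hB) l
    _ = (D * diagonal fun i => (l i : ℂ)).trace.re := by
        rw [re_trace_mul_diagonal]
        refine Finset.sum_congr rfl fun i _ => ?_
        by_cases h : 0 < l i
        · simp [D, h, h.le]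
        · simp [D, h, not_lt.mp h]
    _ = (φ.symm D * M).trace.re := by rw [← hφ (φ.symm D * M), map_mul, hφM, φ.apply_symm_apply]

section Diagonal

variable {P Q : Matrix n n ℂ} {l : n → ℝ}

theorem add_sub_one_apply_eq_zero_or_eq_neg (hP : IsIdempotentElem P) (hQ : IsIdempotentElem Q)
    (hl : P - Q = diagonal fun i => (l i : ℂ)) (i j : n) : (P + Q - 1) i j = 0 ∨ l j = -l i := by
  have h : ((P + Q - 1) * (P - Q)) i j = (-((P - Q) * (P + Q - 1))) i j := by
    rw [add_sub_one_mul_sub_eq_neg hP hQ]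
  rw [hl, Matrix.mul_diagonal, Matrix.neg_apply, Matrix.diagonal_mul] at h
  have hmul : (P + Q - 1) i j * (l i + l j) = 0 := by linear_combination h
  refine (mul_eq_zero.mp hmul).imp_right fun h => eq_neg_of_add_eq_zero_right ?_
  exact_mod_cast h

theorem sum_eq_zero_of_odd_of_sub_eq_diagonal (hP : IsStarProjection P) (hQ : IsStarProjection Q)
    (hl : P - Q = diagonal fun i => (l i : ℂ)) {f : ℝ → ℝ} (hf : f.Odd) (hf1 : f 1 = 0) :
    ∑ i, f (l i) = 0 := by
  let Z := P + Q - 1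
  let w (i j : n) : ℝ := Complex.normSq (Z i j)
  let g (t : ℝ) : ℝ := f t / (1 - t ^ 2)
  have hZ (i j : n) : Z j i = star (Z i j) :=
    (((hP.isSelfAdjoint.add hQ.isSelfAdjoint).sub (.one _)).isHermitian.apply j i).symm
  have w_symm (i j : n) : w i j = w j i := by
    simp only [w, hZ i j, Complex.star_def, Complex.normSq_conj]
  have w_eq_zero (i j : n) : w i j = 0 ∨ l j = -l i :=
    (add_sub_one_apply_eq_zero_or_eq_neg hP.isIdempotentElem hQ.isIdempotentElem hl i j).imp_left
      Complex.normSq_eq_zero.mpr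
  have sum_w (i : n) : ∑ j, w i j = 1 - l i ^ 2 := by
    have h : ((P - Q) ^ 2) i i + (Z * Z) i i = 1 := by
      rw [← Matrix.add_apply, ← sq Z,
        sub_sq_add_add_sub_one_sq hP.isIdempotentElem hQ.isIdempotentElem, Matrix.one_apply_eq]
    rw [hl, diagonal_pow, diagonal_apply_eq, Matrix.mul_apply] at h
    rw [eq_sub_iff_add_eq', ← Complex.ofReal_inj]
    simpa [w, Complex.normSq_eq_conj_mul_self, hZ i, mul_comm] using h
  have f_eq (i : n) : f (l i) = ∑ j, w i j * g (l i) := by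
    rw [← Finset.sum_mul, sum_w]
    by_cases h : l i * l i = 1
    · rcases mul_self_eq_one_iff.mp h with h | h <;> simp [h, hf1, hf 1]
    · exact (mul_div_cancel₀ _ (sub_ne_zero.mpr (sq (l i) ▸ Ne.symm h))).symm
  -- Exchanging `i` and `j` keeps the weight `w i j` and, where it is nonzero, flips `l i`.
  have flip : ∑ i, f (l i) = -∑ i, f (l i) := by
    calc ∑ i, f (l i) = ∑ i, ∑ j, w j i * g (l j) := by
          simp_rw [f_eq]; exact Finset.sum_comm
      _ = ∑ i, ∑ j, -(w i j * g (l i)) := by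
          refine Finset.sum_congr rfl fun i _ => Finset.sum_congr rfl fun j _ => ?_
          rcases w_eq_zero i j with h | h
          · simp [← w_symm i j, h]
          · simp only [w_symm j i, g, h, hf (l i)]
            ring
      _ = -∑ i, f (l i) := by simp_rw [f_eq, Finset.sum_neg_distrib]
  linarith

theorem sum_eq_sum_diag_mul_of_sub_eq_diagonal (hP : IsStarProjection P)
    (hQ : IsStarProjection Q) (hl : P - Q = diagonal fun i => (l i : ℂ)) {f : ℝ → ℝ}
    (hf0 : f 0 = 0) (hf1 : f (-1) = 0) :
    ∑ i, f (l i) = ∑ i, (P i i).re * (f (l i) + f (-l i)) := by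
  have diag (i : n) : l i = 0 ∨ (P i i).re = (1 + l i) / 2 := by
    have hi : P i i - Q i i = l i := by rw [← Matrix.sub_apply, hl, diagonal_apply_eq]
    rcases add_sub_one_apply_eq_zero_or_eq_neg hP.isIdempotentElem hQ.isIdempotentElem hl i i
      with h | h
    · right
      rw [Matrix.sub_apply, Matrix.add_apply, Matrix.one_apply_eq] at h
      have hPi : P i i = ((1 + l i) / 2 : ℝ) := by
        push_cast
        linear_combination (h + hi) / 2
      rw [hPi, Complex.ofReal_re]
    · left; linarith
  let g (t : ℝ) : ℝ := f t - (1 + t) / 2 * (f t + f (-t))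
  have hg : ∑ i, g (l i) = 0 :=
    sum_eq_zero_of_odd_of_sub_eq_diagonal hP hQ hl (fun t => by simp only [g, neg_neg]; ring)
      (by simp [g, hf1])
  rw [← sub_eq_zero, ← Finset.sum_sub_distrib, ← hg]
  refine Finset.sum_congr rfl fun i _ => ?_
  rcases diag i with h | h <;> simp [g, h, hf0]

end Diagonal

theorem posPart_sub_add_posPart_neg_sub_le {s κ t : ℝ} (hs : 0 < s) (hκ : 0 ≤ κ)
    (hκs : κ ≤ s / 2) : (t - κ)⁺ + (-t - κ)⁺ ≤ t ^ 2 / (2 * s) + (s / 2 - κ) := by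
  have amgm : |t| ≤ t ^ 2 / (2 * s) + s / 2 := by
    have h : t ^ 2 / (2 * s) + s / 2 - |t| = (|t| - s) ^ 2 / (2 * s) := by
      rw [← sq_abs]
      field_simp
      ring
    linarith [show 0 ≤ (|t| - s) ^ 2 / (2 * s) by positivity]
  rcases le_total t κ with h | h <;> rcases le_total (-t) κ with h' | h' <;>
    simp only [posPart_def, sup_of_le_left, sup_of_le_right, sub_nonneg, sub_nonpos, h, h']
  · have : 0 ≤ t ^ 2 / (2 * s) := by positivity
    linarith
  all_goals linarith [le_abs_self t, neg_abs_le t]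

theorem re_trace_mul_projection_sub_projection_le {P Q B : Matrix n n ℂ} {s κ : ℝ}
    (hP : IsStarProjection P) (hQ : IsStarProjection Q) (hB : B ∈ Set.Icc 0 1)
    (hs : 0 < s) (hκ : 0 ≤ κ) (hκs : κ ≤ s / 2) :
    (B * (P - Q)).trace.re - κ * B.trace.re ≤
      (P * (P - Q) ^ 2).trace.re / (2 * s) + (s / 2 - κ) * P.trace.re := by
  obtain ⟨φ, l, hφl, hφ⟩ := exists_starAlgEquiv_eq_diagonal
    (hP.isSelfAdjoint.sub hQ.isSelfAdjoint).isHermitian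
  have hφl' : φ P - φ Q = diagonal fun i => (l i : ℂ) := by rw [← map_sub, hφl]
  let f (t : ℝ) : ℝ := (t - κ)⁺
  let p (i : n) : ℝ := (φ P i i).re
  have trace_re (A : Matrix n n ℂ) : A.trace.re = ∑ i, (φ A i i).re := by
    rw [← hφ, Matrix.trace, Complex.re_sum]; rfl
  calc (B * (P - Q)).trace.re - κ * B.trace.re
      = (φ B * diagonal fun i => ((l i - κ : ℝ) : ℂ)).trace.re := by
        rw [← hφ (B * (P - Q)), map_mul, hφl, trace_re B, re_trace_mul_diagonal,
          re_trace_mul_diagonal, Finset.mul_sum, ← Finset.sum_sub_distrib]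
        exact Finset.sum_congr rfl fun i _ => by ring
    _ ≤ ∑ i, f (l i) := re_trace_mul_diagonal_le (starAlgEquiv_mem_Icc φ hB) _
    _ = ∑ i, p i * (f (l i) + f (-l i)) :=
        sum_eq_sum_diag_mul_of_sub_eq_diagonal (hP.map φ) (hQ.map φ) hφl'
          (posPart_eq_zero.mpr (by linarith)) (posPart_eq_zero.mpr (by linarith))
    _ ≤ ∑ i, p i * (l i ^ 2 / (2 * s) + (s / 2 - κ)) := by
        refine Finset.sum_le_sum fun i _ => mul_le_mul_of_nonneg_left
          (posPart_sub_add_posPart_neg_sub_le hs hκ hκs) ?_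
        exact (re_diag_mem_Icc ⟨(hP.map φ).nonneg, (hP.map φ).le_one⟩ i).1
    _ = (P * (P - Q) ^ 2).trace.re / (2 * s) + (s / 2 - κ) * P.trace.re := by
        rw [← hφ (P * (P - Q) ^ 2), map_mul, map_pow, hφl, diagonal_pow, trace_re P]
        simp only [Pi.pow_def, ← Complex.ofReal_pow, re_trace_mul_diagonal, Finset.mul_sum,
          Finset.sum_div, ← Finset.sum_add_distrib]
        exact Finset.sum_congr rfl fun i _ => by ring

theorem re_trace_chsh_le {A₀ A₁ B₀ B₁ : Matrix n n ℂ} (hA₀ : A₀ ∈ Set.Icc 0 1)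
    (hA₁ : A₁ ∈ Set.Icc 0 1) (hB₀ : B₀ ∈ Set.Icc 0 1) (hB₁ : B₁ ∈ Set.Icc 0 1) :
    (A₀ * B₀ + A₀ * B₁ + A₁ * B₀ - A₁ * B₁).trace.re ≤
      (1 / 2 + 1 / √2) * (A₀.trace.re + B₀.trace.re) := by
  set s : ℝ := 1 / √2 with hs
  have hs0 : 0 < s := by positivity
  have hs2 : 2 * s * s = 1 := by
    rw [hs, mul_assoc, div_mul_div_comm, Real.mul_self_sqrt zero_le_two]
    norm_num
  have hB₀' : B₀.IsHermitian := (nonneg_iff_posSemidef.mp hB₀.1).isHermitian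
  have hB₁' : B₁.IsHermitian := (nonneg_iff_posSemidef.mp hB₁.1).isHermitian
  -- `P` and `Q` are Alice's best replies to Bob's effects.
  obtain ⟨P, hP, hA₀P⟩ := exists_isStarProjection_re_trace_mul_le
    ((hB₀'.add hB₁').sub (isHermitian_one.smul (k := 1 / 2 + s) (.all _)))
  obtain ⟨Q, hQ, hA₁Q⟩ := exists_isStarProjection_re_trace_mul_le (hB₀'.sub hB₁')
  have bound₀ := re_trace_mul_projection_sub_projection_le (s := s) (κ := s - 1 / 2)
    hP hQ.one_sub hB₀ hs0 (by nlinarith) (by nlinarith)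
  have bound₁ := re_trace_mul_projection_sub_projection_le hP hQ hB₁ hs0 le_rfl (by positivity)
  have sq_add_sq : (P * (P - Q) ^ 2).trace.re + (P * (P - (1 - Q)) ^ 2).trace.re = P.trace.re := by
    rw [← Complex.add_re, ← Matrix.trace_add, ← Matrix.mul_add, ← sub_add, sub_add_eq_add_sub,
      sub_sq_add_add_sub_one_sq hP.isIdempotentElem hQ.isIdempotentElem, Matrix.mul_one]
  have hA₀P := hA₀P A₀ hA₀
  have hA₁Q := hA₁Q A₁ hA₁
  have inv_two_mul (x : ℝ) : x / (2 * s) = x * s := by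
    rw [div_eq_iff (by positivity)]
    linear_combination -x * hs2
  simp only [mul_add, mul_sub, Matrix.mul_one, Matrix.mul_smul, trace_add, trace_sub, trace_smul,
    trace_mul_comm B₀, trace_mul_comm B₁, Complex.add_re, Complex.sub_re, Complex.smul_re,
    smul_eq_mul, inv_two_mul] at hA₀P hA₁Q bound₀ bound₁ sq_add_sq ⊢
  linear_combination hA₀P + hA₁Q + bound₀ + bound₁ + s * sq_add_sq

end Trace

open scoped MatrixOrder in
theorem isPOVMElem_iff_mem_Icc {d : ℕ} {A : Matrix (Fin d) (Fin d) ℂ} :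
    IsPOVMElem A ↔ A ∈ Set.Icc 0 1 := by
  rw [IsPOVMElem, Set.mem_Icc, nonneg_iff_posSemidef, Matrix.le_iff]

theorem IsPOVMElem.transpose {d : ℕ} {A : Matrix (Fin d) (Fin d) ℂ} (hA : IsPOVMElem A) :
    IsPOVMElem Aᵀ :=
  ⟨hA.1.transpose, by simpa using hA.2.transpose⟩

theorem trace_vecMulVec_vec_mul_kronecker {R m n : Type*} [Fintype m] [Fintype n] [CommSemiring R]
    [StarRing R] (X : Matrix m n R) (A : Matrix n n R) (B : Matrix m m R) :
    (vecMulVec (vec X) (star (vec X)) * (A ⊗ₖ B)).trace = (Xᴴ * (B * X * Aᵀ)).trace := by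
  rw [Matrix.trace_mul_comm, mul_vecMulVec, trace_vecMulVec, kronecker_mulVec_vec,
    dotProduct_comm, star_vec_dotProduct_vec]

theorem re_trace_maxEntState_mul_kronecker {d : ℕ} (A B : Matrix (Fin d) (Fin d) ℂ) :
    (maxEntState d * (A ⊗ₖ B)).trace.re = (A * Bᵀ).trace.re / d := by
  have hvec : maxEntVec d = vec ((1 / √d : ℂ) • (1 : Matrix (Fin d) (Fin d) ℂ)) := by
    ext ⟨i, j⟩
    simp [maxEntVec, Matrix.one_apply, eq_comm]
  have hsqrt : (√d : ℂ)⁻¹ * (√d : ℂ)⁻¹ = ((d : ℝ)⁻¹ : ℝ) := by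
    rw [← mul_inv, ← Complex.ofReal_mul, Real.mul_self_sqrt d.cast_nonneg, Complex.ofReal_inv]
  have htrace : (maxEntState d * (A ⊗ₖ B)).trace = ((d : ℝ)⁻¹ : ℝ) * (A * Bᵀ).trace := by
    change (vecMulVec (maxEntVec d) (star (maxEntVec d)) * (A ⊗ₖ B)).trace = _
    rw [hvec, trace_vecMulVec_vec_mul_kronecker, ← trace_transpose (A * Bᵀ), ← hsqrt]
    simp [mul_assoc]
  rw [htrace, Complex.re_ofReal_mul, inv_mul_eq_div]

theorem tiltedCHBell_maxEntState_nonpos {τ : ℝ} (hτ : 1 / 2 + 1 / √2 ≤ τ) {d : ℕ}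
    {A₀ A₁ B₀ B₁ : Matrix (Fin d) (Fin d) ℂ} (hA₀ : IsPOVMElem A₀) (hA₁ : IsPOVMElem A₁)
    (hB₀ : IsPOVMElem B₀) (hB₁ : IsPOVMElem B₁) :
    tiltedCHBell τ (maxEntState d) A₀ A₁ B₀ B₁ ≤ 0 := by
  have value : tiltedCHBell τ (maxEntState d) A₀ A₁ B₀ B₁ =
      ((A₀ * B₀ᵀ + A₀ * B₁ᵀ + A₁ * B₀ᵀ - A₁ * B₁ᵀ).trace.re
        - τ * (A₀.trace.re + B₀ᵀ.trace.re)) / d := by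
    simp only [tiltedCHBell, Matrix.mul_add, Matrix.mul_sub, trace_add, trace_sub, Complex.add_re,
      Complex.sub_re, re_trace_maxEntState_mul_kronecker, transpose_one, Matrix.mul_one,
      Matrix.one_mul]
    ring
  have chsh := re_trace_chsh_le (isPOVMElem_iff_mem_Icc.mp hA₀) (isPOVMElem_iff_mem_Icc.mp hA₁)
    (isPOVMElem_iff_mem_Icc.mp hB₀.transpose) (isPOVMElem_iff_mem_Icc.mp hB₁.transpose)
  have trace_nonneg : 0 ≤ A₀.trace.re + B₀ᵀ.trace.re :=
    add_nonneg (Complex.le_def.mp hA₀.1.trace_nonneg).1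
      (Complex.le_def.mp hB₀.transpose.1.trace_nonneg).1
  rw [value]
  refine div_nonpos_of_nonpos_of_nonneg (sub_nonpos.mpr (chsh.trans ?_)) d.cast_nonneg
  gcongr

theorem isDensityMatrix_schmidtState (γ : ℝ) : IsDensityMatrix (schmidtState γ) := by
  refine ⟨posSemidef_vecMulVec_self_star _, ?_⟩
  simp only [schmidtState, schmidtVec, trace_vecMulVec, dotProduct, Fintype.sum_prod_type,
    Fin.sum_univ_two]
  simpa [-Complex.ofReal_cos, -Complex.ofReal_sin, ← sq] using
    mod_cast Real.cos_sq_add_sin_sq γ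

/-- The rank-one projection of `ℂ²` onto the real ray spanned by `(sin θ, cos θ)`. The angle is
measured from the second basis vector, the one that `schmidtVec γ` weights by `sin γ`. -/
noncomputable def rayProj (θ : ℝ) : Matrix (Fin 2) (Fin 2) ℂ :=
  vecMulVec ![(Real.sin θ : ℂ), (Real.cos θ : ℂ)] ![(Real.sin θ : ℂ), (Real.cos θ : ℂ)]

theorem posSemidef_rayProj (θ : ℝ) : (rayProj θ).PosSemidef := by
  have h : star ![(Real.sin θ : ℂ), (Real.cos θ : ℂ)] = ![(Real.sin θ : ℂ), (Real.cos θ : ℂ)] := by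
    ext i
    fin_cases i <;> simp [-Complex.ofReal_cos, -Complex.ofReal_sin]
  simpa only [rayProj, h] using posSemidef_vecMulVec_self_star ![(Real.sin θ : ℂ), (Real.cos θ : ℂ)]

theorem one_sub_rayProj (θ : ℝ) : 1 - rayProj θ = rayProj (θ + Real.pi / 2) := by
  ext i j
  fin_cases i <;> fin_cases j <;>
    simp [rayProj, Real.sin_add_pi_div_two, Real.cos_add_pi_div_two] <;>
    grind [Complex.sin_sq_add_cos_sq (θ : ℂ)]

theorem isPOVMElem_rayProj (θ : ℝ) : IsPOVMElem (rayProj θ) :=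
  ⟨posSemidef_rayProj θ, one_sub_rayProj θ ▸ posSemidef_rayProj _⟩

theorem re_trace_schmidtState_mul_rayProj_kronecker (γ α β : ℝ) :
    (schmidtState γ * (rayProj α ⊗ₖ rayProj β)).trace.re =
      (Real.cos γ * (Real.sin α * Real.sin β) + Real.sin γ * (Real.cos α * Real.cos β)) ^ 2 := by
  have hvec : schmidtVec γ = vec (diagonal ![(Real.cos γ : ℂ), (Real.sin γ : ℂ)]) := by
    ext ⟨i, j⟩
    fin_cases i <;> fin_cases j <;> simp [schmidtVec]
  rw [← Complex.ofReal_re (_ ^ 2)]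
  congr 1
  change (vecMulVec (schmidtVec γ) (star (schmidtVec γ)) * (rayProj α ⊗ₖ rayProj β)).trace = _
  rw [hvec, trace_vecMulVec_vec_mul_kronecker, rayProj, rayProj]
  simp only [Matrix.trace, diag_apply, Matrix.mul_apply, diagonal_conjTranspose, diagonal_apply,
    transpose_apply, vecMulVec_apply, Fin.sum_univ_two, ite_mul, zero_mul, mul_ite, mul_zero,
    Finset.sum_ite_eq, Finset.sum_ite_eq', Finset.mem_univ, ↓reduceIte, Pi.star_apply,
    RCLike.star_def, cons_val_zero, cons_val_one, Complex.conj_ofReal, Complex.ofReal_pow,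
    Complex.ofReal_add, Complex.ofReal_mul]
  ring

theorem tiltedCHBell_schmidtState_rayProj (τ γ α : ℝ) :
    tiltedCHBell τ (schmidtState γ) (rayProj 0) (rayProj α) (rayProj 0) (rayProj (-α)) =
      Real.sin γ ^ 2 * (1 + 2 * Real.cos α ^ 2 - 2 * τ)
        - (Real.sin γ * Real.cos α ^ 2 - Real.cos γ * Real.sin α ^ 2) ^ 2 := by
  have one_eq : (1 : Matrix (Fin 2) (Fin 2) ℂ) = rayProj 0 + rayProj (Real.pi / 2) := by
    rw [← zero_add (Real.pi / 2), ← one_sub_rayProj, add_sub_cancel]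
  simp only [tiltedCHBell, one_eq, kronecker_add, add_kronecker, Matrix.mul_add, Matrix.mul_sub,
    trace_add, trace_sub, Complex.add_re, Complex.sub_re,
    re_trace_schmidtState_mul_rayProj_kronecker, Real.sin_zero, Real.cos_zero, Real.sin_neg,
    Real.cos_neg, Real.cos_pi_div_two]
  ring

theorem exists_mem_quantumTiltedCHValues_pos {τ : ℝ} (hτ : τ < 3 / 2) :
    ∃ s ∈ quantumTiltedCHValues τ, 0 < s := by
  let α := min 1 (3 / 2 - τ)
  -- This Schmidt angle makes the square in `tiltedCHBell_schmidtState_rayProj` vanish.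
  let γ := Real.arctan (Real.tan α ^ 2)
  have hα0 : 0 < α := lt_min one_pos (by linarith)
  have hα1 : α ≤ 1 := min_le_left _ _
  have hα2 : α < Real.pi / 2 := by linarith [Real.pi_gt_three]
  have hcosα : 0 < Real.cos α := Real.cos_pos_of_mem_Ioo ⟨by linarith, hα2⟩
  have hcosγ : 0 < Real.cos γ := Real.cos_arctan_pos _
  have hsinγ : Real.sin γ * Real.cos α ^ 2 = Real.cos γ * Real.sin α ^ 2 := by
    have h : Real.sin γ / Real.cos γ = (Real.sin α / Real.cos α) ^ 2 := by
      rw [← Real.tan_eq_sin_div_cos, ← Real.tan_eq_sin_div_cos, Real.tan_arctan]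
    field_simp at h
    linear_combination h
  have hsinγ0 : 0 < Real.sin γ :=
    Real.sin_arctan_pos.mpr (pow_pos (Real.tan_pos_of_pos_of_lt_pi_div_two hα0 hα2) 2)
  have hsinα : Real.sin α ^ 2 < 3 / 2 - τ := by
    have h0 : 0 < Real.sin α := Real.sin_pos_of_pos_of_lt_pi hα0 (by linarith [Real.pi_pos])
    calc Real.sin α ^ 2 < α ^ 2 := by gcongr; exact Real.sin_lt hα0
      _ ≤ α := pow_le_of_le_one hα0.le hα1 two_ne_zero
      _ ≤ 3 / 2 - τ := min_le_right _ _
  refine ⟨_, ⟨2, one_le_two, schmidtState γ, rayProj 0, rayProj α, rayProj 0, rayProj (-α),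
    isDensityMatrix_schmidtState γ, isPOVMElem_rayProj _, isPOVMElem_rayProj _,
    isPOVMElem_rayProj _, isPOVMElem_rayProj _, rfl⟩, ?_⟩
  rw [tiltedCHBell_schmidtState_rayProj, hsinγ, sub_self, zero_pow two_ne_zero, sub_zero]
  exact mul_pos (pow_pos hsinγ0 2) (by linarith [Real.sin_sq_add_cos_sq α])

open scoped MatrixOrder in
theorem re_trace_mul_kronecker_mem_Icc {d : ℕ}
    {ρ : Matrix (Fin d × Fin d) (Fin d × Fin d) ℂ} (hρ : IsDensityMatrix ρ)
    {A B : Matrix (Fin d) (Fin d) ℂ} (hA : IsPOVMElem A) (hB : IsPOVMElem B) :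
    (ρ * (A ⊗ₖ B)).trace.re ∈ Set.Icc 0 1 := by
  have hρ0 := nonneg_iff_posSemidef.mpr hρ.1
  have hle : A ⊗ₖ B ≤ 1 := by
    have h : 1 - A ⊗ₖ B = (1 - A) ⊗ₖ 1 + A ⊗ₖ (1 - B) := by
      rw [sub_eq_iff_eq_add, add_assoc, ← kronecker_add, sub_add_cancel, ← add_kronecker,
        sub_add_cancel, one_kronecker_one]
    rw [Matrix.le_iff, h]
    exact (hA.2.kronecker .one).add (hA.1.kronecker hB.2)
  have h1 := re_trace_mul_nonneg hρ0 (sub_nonneg.mpr hle)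
  rw [mul_sub, Matrix.mul_one, trace_sub, Complex.sub_re, hρ.2, Complex.one_re, sub_nonneg] at h1
  exact ⟨re_trace_mul_nonneg hρ0 (nonneg_iff_posSemidef.mpr (hA.1.kronecker hB.1)), h1⟩

theorem bddAbove_quantumTiltedCHValues (τ : ℝ) : BddAbove (quantumTiltedCHValues τ) := by
  refine ⟨3 + 2 * |τ|, ?_⟩
  rintro _ ⟨d, -, ρ, A₀, A₁, B₀, B₁, hρ, hA₀, hA₁, hB₀, hB₁, rfl⟩
  have neg_mul_le {x : ℝ} (hx : x ∈ Set.Icc 0 1) : -(τ * x) ≤ |τ| :=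
    calc -(τ * x) ≤ |τ| * x := by rw [← neg_mul]; gcongr; exacts [hx.1, neg_le_abs τ]
      _ ≤ |τ| := mul_le_of_le_one_right (abs_nonneg τ) hx.2
  have one : IsPOVMElem (1 : Matrix (Fin d) (Fin d) ℂ) := ⟨.one, by simpa using PosSemidef.zero⟩
  simp only [tiltedCHBell, Matrix.mul_add, Matrix.mul_sub, trace_add, trace_sub, Complex.add_re,
    Complex.sub_re]
  linarith [(re_trace_mul_kronecker_mem_Icc hρ hA₀ hB₀).2,
    (re_trace_mul_kronecker_mem_Icc hρ hA₀ hB₁).2, (re_trace_mul_kronecker_mem_Icc hρ hA₁ hB₀).2,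
    (re_trace_mul_kronecker_mem_Icc hρ hA₁ hB₁).1,
    neg_mul_le (re_trace_mul_kronecker_mem_Icc hρ hA₀ one),
    neg_mul_le (re_trace_mul_kronecker_mem_Icc hρ one hB₀)]

/-- Theorem 1: for `1/2 + 1/√2 ≤ τ < 3/2`, no finite-dimensional
maximally entangled state attains the maximal quantum violation of `I^(τ)`. -/
theorem maxEnt_lt_quantum_sup
    (τ : ℝ) (hτ₁ : 1 / 2 + 1 / Real.sqrt 2 ≤ τ) (hτ₂ : τ < 3 / 2)
    (d : ℕ) (hd : 1 ≤ d)
    (A0 A1 B0 B1 : Matrix (Fin d) (Fin d) ℂ)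
    (hA0 : IsPOVMElem A0) (hA1 : IsPOVMElem A1)
    (hB0 : IsPOVMElem B0) (hB1 : IsPOVMElem B1) :
    tiltedCHBell τ (maxEntState d) A0 A1 B0 B1 < sSup (quantumTiltedCHValues τ) := by
  obtain ⟨s, hs, hs0⟩ := exists_mem_quantumTiltedCHValues_pos hτ₂
  calc tiltedCHBell τ (maxEntState d) A0 A1 B0 B1
      ≤ 0 := tiltedCHBell_maxEntState_nonpos hτ₁ hA0 hA1 hB0 hB1
    _ < s := hs0
    _ ≤ sSup (quantumTiltedCHValues τ) := le_csSup (bddAbove_quantumTiltedCHValues τ) hs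
end

section
/- Let d ≥ 1, let ρ be a density matrix on ℂ^d⊗ℂ^d, and let A₀,A₁,B₀,B₁ be POVM elements on ℂ^d such that all four outcome-0 marginal probabilities equal one half: Re tr(ρ·(A_x⊗1)) = 1/2 for x = 0,1 and Re tr(ρ·(1⊗B_y)) = 1/2 for y = 0,1. Then for every τ ∈ ℝ, S^(τ)(ρ; A₀,A₁,B₀,B₁) ≤ 1/√2 − 1/2 − (τ − 1). In particular the value is ≤ 0 whenever τ ≥ 1/2 + 1/√2. -/
open Matrix
open scoped Kronecker ComplexOrder

/-!
For effects `a₀, a₁` commuting with effects `b₀, b₁`, the observables `Xᵢ = 2aᵢ - 1` and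
`Yⱼ = 2bⱼ - 1` satisfy
`X₀Y₀ + X₀Y₁ + X₁Y₀ - X₁Y₁ = 4 (a₀b₀ + a₀b₁ + a₁b₀ - a₁b₁ - a₀ - b₀) + 2`,
so Tsirelson's bound `2√2` becomes the operator inequality
`a₀b₀ + a₀b₁ + a₁b₀ - a₁b₁ - a₀ - b₀ ≤ 1/√2 - 1/2`. Its expectation in a state bounds the
tilted-CH value at `τ = 1`; the value at any other `τ` differs by `τ - 1` times the sum of the two
marginals of `a₀` and `b₀`. Tsirelson's bound holds for self-adjoint `X` with `X² ≤ 1`, not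
just for involutions, since the defects `1 - X²` only add nonnegative terms to the sum of squares.
-/

section OrderedStarAlgebra

variable {R : Type*} [Ring R]

theorem four_mul_smul_one_sub_chsh_eq [Algebra ℝ R] {X₀ X₁ Y₀ Y₁ : R}
    (h₀₀ : Commute X₀ Y₀) (h₀₁ : Commute X₀ Y₁) (h₁₀ : Commute X₁ Y₀) (h₁₁ : Commute X₁ Y₁)
    {s : ℝ} (hs : s ^ 2 = 1 / 2) :
    (4 * s) • 1 - (X₀ * Y₀ + X₀ * Y₁ + X₁ * Y₀ - X₁ * Y₁) =
      s • ((1 - X₀ ^ 2) + (1 - X₁ ^ 2) + (1 - Y₀ ^ 2) + (1 - Y₁ ^ 2) +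
        (X₀ - s • (Y₀ + Y₁)) ^ 2 + (X₁ - s • (Y₀ - Y₁)) ^ 2) := by
  simp only [sq, mul_add, mul_sub, add_mul, sub_mul, smul_add, smul_sub, smul_mul_assoc,
    mul_smul_comm, ← h₀₀.eq, ← h₀₁.eq, ← h₁₀.eq, ← h₁₁.eq]
  match_scalars <;> grind

theorem isSelfAdjoint_two_mul_sub_one [StarRing R] {p : R} (hp : IsSelfAdjoint p) :
    IsSelfAdjoint (2 * p - 1) :=
  two_mul p ▸ (hp.add hp).sub (.one R)

variable [PartialOrder R] [StarRing R] [StarOrderedRing R]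

theorem chsh_le_of_sq_le_one [Algebra ℝ R] [StarModule ℝ R] {X₀ X₁ Y₀ Y₁ : R}
    (hX₀ : IsSelfAdjoint X₀) (hX₁ : IsSelfAdjoint X₁)
    (hY₀ : IsSelfAdjoint Y₀) (hY₁ : IsSelfAdjoint Y₁)
    (hX₀_sq : X₀ ^ 2 ≤ 1) (hX₁_sq : X₁ ^ 2 ≤ 1) (hY₀_sq : Y₀ ^ 2 ≤ 1) (hY₁_sq : Y₁ ^ 2 ≤ 1)
    (h₀₀ : Commute X₀ Y₀) (h₀₁ : Commute X₀ Y₁) (h₁₀ : Commute X₁ Y₀) (h₁₁ : Commute X₁ Y₁) :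
    X₀ * Y₀ + X₀ * Y₁ + X₁ * Y₀ - X₁ * Y₁ ≤ (2 * √2) • (1 : R) := by
  have hs : (1 / √2) ^ 2 = 1 / 2 := by simp
  have hbound : 2 * √2 = 4 * (1 / √2) := by
    rw [← Real.sqrt_div_self']
    ring
  have hU : 0 ≤ (X₀ - (1 / √2) • (Y₀ + Y₁)) ^ 2 :=
    (hX₀.sub ((IsSelfAdjoint.all (1 / √2)).smul (hY₀.add hY₁))).sq_nonneg
  have hV : 0 ≤ (X₁ - (1 / √2) • (Y₀ - Y₁)) ^ 2 :=
    (hX₁.sub ((IsSelfAdjoint.all (1 / √2)).smul (hY₀.sub hY₁))).sq_nonneg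
  rw [← sub_nonneg] at hX₀_sq hX₁_sq hY₀_sq hY₁_sq
  rw [← sub_nonneg, hbound, four_mul_smul_one_sub_chsh_eq h₀₀ h₀₁ h₁₀ h₁₁ hs]
  positivity

theorem two_mul_sub_one_sq_le_one {p : R} (hp : p ∈ Set.Icc 0 1) : (2 * p - 1) ^ 2 ≤ 1 := by
  have hq : 0 ≤ 1 - p := sub_nonneg.mpr hp.2
  have hdefect : 1 - (2 * p - 1) ^ 2 = 4 • (p * (1 - p) * p + (1 - p) * p * (1 - p)) := by
    noncomm_ring
  rw [← sub_nonneg, hdefect]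
  exact nsmul_nonneg
    (add_nonneg (conjugate_nonneg_of_nonneg hq hp.1) (conjugate_nonneg_of_nonneg hp.1 hq)) 4

theorem clauserHorne_le [Algebra ℝ R] [StarModule ℝ R] {a₀ a₁ b₀ b₁ : R}
    (ha₀ : a₀ ∈ Set.Icc 0 1) (ha₁ : a₁ ∈ Set.Icc 0 1)
    (hb₀ : b₀ ∈ Set.Icc 0 1) (hb₁ : b₁ ∈ Set.Icc 0 1)
    (h₀₀ : Commute a₀ b₀) (h₀₁ : Commute a₀ b₁) (h₁₀ : Commute a₁ b₀) (h₁₁ : Commute a₁ b₁) :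
    a₀ * b₀ + a₀ * b₁ + a₁ * b₀ - a₁ * b₁ - a₀ - b₀ ≤ (1 / √2 - 1 / 2) • (1 : R) := by
  have hsa {p : R} (hp : p ∈ Set.Icc 0 1) : IsSelfAdjoint (2 * p - 1) :=
    isSelfAdjoint_two_mul_sub_one (.of_nonneg hp.1)
  have hcomm {p q : R} (h : Commute p q) : Commute (2 * p - 1) (2 * q - 1) := by
    simp only [two_mul]
    exact ((h.add_left h).add_right (h.add_left h)).sub_right (.one_right _) |>.sub_left
      (.one_left _)
  have hchsh := chsh_le_of_sq_le_one (hsa ha₀) (hsa ha₁) (hsa hb₀) (hsa hb₁)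
    (two_mul_sub_one_sq_le_one ha₀) (two_mul_sub_one_sq_le_one ha₁)
    (two_mul_sub_one_sq_le_one hb₀) (two_mul_sub_one_sq_le_one hb₁)
    (hcomm h₀₀) (hcomm h₀₁) (hcomm h₁₀) (hcomm h₁₁)
  have hCH : a₀ * b₀ + a₀ * b₁ + a₁ * b₀ - a₁ * b₁ - a₀ - b₀ =
      (1 / 4 : ℝ) • ((2 * a₀ - 1) * (2 * b₀ - 1) + (2 * a₀ - 1) * (2 * b₁ - 1) +
        (2 * a₁ - 1) * (2 * b₀ - 1) - (2 * a₁ - 1) * (2 * b₁ - 1)) - (1 / 2 : ℝ) • 1 := by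
    simp only [two_mul, mul_add, mul_sub, add_mul, sub_mul, mul_one, one_mul]
    module
  calc a₀ * b₀ + a₀ * b₁ + a₁ * b₀ - a₁ * b₁ - a₀ - b₀
      ≤ (1 / 4 : ℝ) • (2 * √2) • (1 : R) - (1 / 2 : ℝ) • 1 := by
        rw [hCH]
        gcongr
    _ = (1 / √2 - 1 / 2) • (1 : R) := by
        rw [← Real.sqrt_div_self']
        module

end OrderedStarAlgebra

section Matrix

open scoped MatrixOrder

variable {m n 𝕜 : Type*} [RCLike 𝕜]

theorem trace_mul_nonneg [Fintype n] {A B : Matrix n n 𝕜} (hA : 0 ≤ A) (hB : 0 ≤ B) :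
    0 ≤ (A * B).trace := by
  classical
  obtain ⟨C, rfl⟩ := CStarAlgebra.nonneg_iff_eq_star_mul_self.mp hA
  rw [Matrix.mul_assoc, Matrix.trace_mul_comm]
  exact (star_right_conjugate_nonneg hB C).posSemidef.trace_nonneg

theorem IsDensityMatrix.re_trace_mul_le [Fintype n] [DecidableEq n] {ρ M : Matrix n n ℂ}
    (hρ : IsDensityMatrix ρ) {c : ℝ} (hM : M ≤ c • 1) : (ρ * M).trace.re ≤ c := by
  have htrace : (ρ * (c • 1 - M)).trace = c - (ρ * M).trace := by
    simp [mul_sub, Matrix.trace_sub, hρ.2]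
  have hnonneg := trace_mul_nonneg hρ.1.nonneg (sub_nonneg.mpr hM)
  rw [htrace] at hnonneg
  simpa using (Complex.le_def.mp hnonneg).1

variable [DecidableEq m] [DecidableEq n]

theorem kronecker_mem_Icc [Finite m] [Finite n] {A : Matrix m m 𝕜} {B : Matrix n n 𝕜}
    (hA : A ∈ Set.Icc 0 1) (hB : B ∈ Set.Icc 0 1) : A ⊗ₖ B ∈ Set.Icc 0 1 := by
  have hcompl : 1 - A ⊗ₖ B = (1 - A) ⊗ₖ 1 + A ⊗ₖ (1 - B) := by
    rw [sub_eq_iff_eq_add, add_assoc, ← kronecker_add, sub_add_cancel, ← add_kronecker,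
      sub_add_cancel, one_kronecker_one]
  refine ⟨(hA.1.posSemidef.kronecker hB.1.posSemidef).nonneg, ?_⟩
  rw [Matrix.le_iff, hcompl]
  exact (PosSemidef.kronecker hA.2 .one).add (hA.1.posSemidef.kronecker hB.2)

theorem clauserHorne_kronecker_le [Finite m] [Finite n]
    {A₀ A₁ : Matrix m m 𝕜} {B₀ B₁ : Matrix n n 𝕜}
    (hA₀ : A₀ ∈ Set.Icc 0 1) (hA₁ : A₁ ∈ Set.Icc 0 1)
    (hB₀ : B₀ ∈ Set.Icc 0 1) (hB₁ : B₁ ∈ Set.Icc 0 1) :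
    A₀ ⊗ₖ B₀ + A₀ ⊗ₖ B₁ + A₁ ⊗ₖ B₀ - A₁ ⊗ₖ B₁ - A₀ ⊗ₖ 1 - 1 ⊗ₖ B₀ ≤
      (1 / √2 - 1 / 2) • (1 : Matrix (m × n) (m × n) 𝕜) := by
  have := Fintype.ofFinite m
  have := Fintype.ofFinite n
  have hone_m : (1 : Matrix m m 𝕜) ∈ Set.Icc 0 1 := ⟨PosSemidef.one.nonneg, le_rfl⟩
  have hone_n : (1 : Matrix n n 𝕜) ∈ Set.Icc 0 1 := ⟨PosSemidef.one.nonneg, le_rfl⟩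
  have hmul (A : Matrix m m 𝕜) (B : Matrix n n 𝕜) : (A ⊗ₖ 1) * (1 ⊗ₖ B) = A ⊗ₖ B := by
    rw [← mul_kronecker_mul, mul_one, one_mul]
  have hcomm (A : Matrix m m 𝕜) (B : Matrix n n 𝕜) :
      Commute (A ⊗ₖ (1 : Matrix n n 𝕜)) ((1 : Matrix m m 𝕜) ⊗ₖ B) := by
    rw [Commute, SemiconjBy, hmul, ← mul_kronecker_mul, mul_one, one_mul]
  have hCH := clauserHorne_le (R := Matrix (m × n) (m × n) 𝕜)
    (kronecker_mem_Icc hA₀ hone_n) (kronecker_mem_Icc hA₁ hone_n)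
    (kronecker_mem_Icc hone_m hB₀) (kronecker_mem_Icc hone_m hB₁)
    (hcomm A₀ B₀) (hcomm A₀ B₁) (hcomm A₁ B₀) (hcomm A₁ B₁)
  rwa [hmul, hmul, hmul, hmul] at hCH

theorem IsPOVMElem.mem_Icc {d : ℕ} {A : Matrix (Fin d) (Fin d) ℂ} (hA : IsPOVMElem A) :
    A ∈ Set.Icc 0 1 :=
  ⟨hA.1.nonneg, hA.2⟩

end Matrix

theorem tiltedCHBell_le_of_uniform_marginals_general {d : ℕ}
    {ρ : Matrix (Fin d × Fin d) (Fin d × Fin d) ℂ} {A0 A1 B0 B1 : Matrix (Fin d) (Fin d) ℂ}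
    (hρ : IsDensityMatrix ρ)
    (hA0 : IsPOVMElem A0) (hA1 : IsPOVMElem A1) (hB0 : IsPOVMElem B0) (hB1 : IsPOVMElem B1)
    (τ : ℝ) :
    tiltedCHBell τ ρ A0 A1 B0 B1 ≤ 1 / √2 - 1 / 2 -
      (τ - 1) * ((ρ * (A0 ⊗ₖ 1)).trace.re + (ρ * (1 ⊗ₖ B0)).trace.re) := by
  have hCH := hρ.re_trace_mul_le
    (clauserHorne_kronecker_le hA0.mem_Icc hA1.mem_Icc hB0.mem_Icc hB1.mem_Icc)
  rw [mul_sub, mul_sub, trace_sub, trace_sub, Complex.sub_re, Complex.sub_re] at hCH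
  unfold tiltedCHBell
  linarith

/-- if all four outcome-0 marginal probabilities equal 1/2, then
`S^(τ) ≤ 1/√2 − 1/2 − (τ − 1)` for every real `τ`; in particular `S^(τ) ≤ 0`
whenever `τ ≥ 1/2 + 1/√2`. -/
theorem tiltedCHBell_le_of_uniform_marginals
    (d : ℕ) (hd : 1 ≤ d)
    (ρ : Matrix (Fin d × Fin d) (Fin d × Fin d) ℂ)
    (A0 A1 B0 B1 : Matrix (Fin d) (Fin d) ℂ)
    (hρ : IsDensityMatrix ρ)
    (hA0 : IsPOVMElem A0) (hA1 : IsPOVMElem A1)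
    (hB0 : IsPOVMElem B0) (hB1 : IsPOVMElem B1)
    (hmA0 : (Matrix.trace (ρ * (A0 ⊗ₖ (1 : Matrix (Fin d) (Fin d) ℂ)))).re = 1 / 2)
    (hmA1 : (Matrix.trace (ρ * (A1 ⊗ₖ (1 : Matrix (Fin d) (Fin d) ℂ)))).re = 1 / 2)
    (hmB0 : (Matrix.trace (ρ * ((1 : Matrix (Fin d) (Fin d) ℂ) ⊗ₖ B0))).re = 1 / 2)
    (hmB1 : (Matrix.trace (ρ * ((1 : Matrix (Fin d) (Fin d) ℂ) ⊗ₖ B1))).re = 1 / 2) :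
    ∀ τ : ℝ,
      tiltedCHBell τ ρ A0 A1 B0 B1 ≤ 1 / Real.sqrt 2 - 1 / 2 - (τ - 1) ∧
      (1 / 2 + 1 / Real.sqrt 2 ≤ τ → tiltedCHBell τ ρ A0 A1 B0 B1 ≤ 0) := by
  intro τ
  have hbound := tiltedCHBell_le_of_uniform_marginals_general hρ hA0 hA1 hB0 hB1 τ
  rw [hmA0, hmB0] at hbound
  exact ⟨by linarith, fun hτ => by linarith⟩
end

section
/- Let γ ∈ [0, π/4], τ ≥ 1, and let A₀,A₁,B₀,B₁ be arbitrary POVM elements on ℂ². Then the tilted-CH Bell value of the pure two-qubit state |ψ^γ⟩ is bounded as S^(τ)(ρ_γ; A₀,A₁,B₀,B₁) ≤ max{0, 2(1−τ)·sin²γ + (√(1 + sin²(2γ)) − 1)/2}. -/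
open Matrix
open scoped Kronecker ComplexOrder

/-!
The Bell value is affine in each party's pair of effects, so every qubit effect may be replaced by
an extreme one: `0`, `1` or a rank-one projection. If one party's two effects commute, that party's
answers can be predetermined and the value is at most `0` because `τ ≥ 1`; this covers `0` and `1`.

If all four effects are rank-one projections with Bloch vectors `a₀, a₁, b₀, b₁`, the Bell value of
`ρ_γ` equals `(1 - τ) (1 + cos 2γ · w) + (C / 2 - 1) / 2`, where `w` is the mean of the
`z`-components of `a₀` and `b₀`, and `C` is the CHSH value of the correlation tensor
`diag (sin 2γ, -sin 2γ, 1)`. Since `|w| ≤ 1`, the first bracket is at least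
`2 min (sin² γ, cos² γ)`, and Horodecki's criterion gives `C ≤ 2 √(1 + sin² 2γ)`.
-/

open scoped MatrixOrder RealInnerProductSpace

section JointProbability

variable {m n : Type*} [Fintype m] [Fintype n]

/-- The Born-rule probability `tr (ρ (A ⊗ B))` of a pair of local outcomes, as a real bilinear form
in the local effects. -/
noncomputable def jointProb (ρ : Matrix (m × n) (m × n) ℂ) :
    Matrix m m ℂ →ₗ[ℝ] Matrix n n ℂ →ₗ[ℝ] ℝ :=
  LinearMap.mk₂ ℝ (fun A B => (trace (ρ * (A ⊗ₖ B))).re)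
    (fun A A' B => by simp [add_kronecker, mul_add])
    (fun c A B => by simp [smul_kronecker])
    (fun A B B' => by simp [kronecker_add, mul_add])
    (fun c A B => by simp [kronecker_smul])

theorem jointProb_apply (ρ : Matrix (m × n) (m × n) ℂ) (A : Matrix m m ℂ) (B : Matrix n n ℂ) :
    jointProb ρ A B = (trace (ρ * (A ⊗ₖ B))).re :=
  rfl

theorem trace_mul_nonneg_of_posSemidef {A B : Matrix n n ℂ} (hA : A.PosSemidef)
    (hB : B.PosSemidef) : 0 ≤ trace (A * B) := by
  classical
  obtain ⟨C, rfl⟩ := CStarAlgebra.nonneg_iff_eq_star_mul_self.mp hA.nonneg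
  rw [Matrix.mul_assoc, trace_mul_comm]
  exact (hB.mul_mul_conjTranspose_same C).trace_nonneg

theorem jointProb_nonneg {ρ : Matrix (m × n) (m × n) ℂ} (hρ : ρ.PosSemidef)
    {A : Matrix m m ℂ} {B : Matrix n n ℂ} (hA : A.PosSemidef) (hB : B.PosSemidef) :
    0 ≤ jointProb ρ A B :=
  (Complex.le_def.mp (trace_mul_nonneg_of_posSemidef hρ (hA.kronecker hB))).1

theorem jointProb_submatrix_swap (ρ : Matrix (m × n) (m × n) ℂ) (A : Matrix m m ℂ)
    (B : Matrix n n ℂ) :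
    jointProb (ρ.submatrix Prod.swap Prod.swap) B A = jointProb ρ A B := by
  have swap_kronecker : B ⊗ₖ A = (A ⊗ₖ B).submatrix Prod.swap Prod.swap := by
    ext; simp [mul_comm]
  rw [jointProb_apply, jointProb_apply, swap_kronecker,
    ← submatrix_mul _ _ _ _ _ Prod.swap_bijective]
  exact congrArg Complex.re (Equiv.sum_comp (Equiv.prodComm n m) fun i => (ρ * A ⊗ₖ B) i i)

end JointProbability

section LocalBound

variable {d : ℕ} {A0 A1 B0 B1 : Matrix (Fin d) (Fin d) ℂ}
  {τ : ℝ} {ρ : Matrix (Fin d × Fin d) (Fin d × Fin d) ℂ}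

theorem isPOVMElem_zero : IsPOVMElem (0 : Matrix (Fin d) (Fin d) ℂ) :=
  ⟨.zero, by simpa using PosSemidef.one⟩

theorem isPOVMElem_one : IsPOVMElem (1 : Matrix (Fin d) (Fin d) ℂ) :=
  ⟨.one, by simpa using PosSemidef.zero⟩

theorem tiltedCHBell_eq_jointProb (τ : ℝ) (ρ : Matrix (Fin d × Fin d) (Fin d × Fin d) ℂ)
    (A0 A1 B0 B1 : Matrix (Fin d) (Fin d) ℂ) :
    tiltedCHBell τ ρ A0 A1 B0 B1 =
      jointProb ρ A0 B0 + jointProb ρ A0 B1 + jointProb ρ A1 B0 - jointProb ρ A1 B1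
        - τ * jointProb ρ A0 1 - τ * jointProb ρ 1 B0 := by
  simp only [tiltedCHBell, jointProb_apply, mul_sub, mul_add, trace_sub, trace_add,
    Complex.sub_re, Complex.add_re]

theorem tiltedCHBell_submatrix_swap (τ : ℝ) (ρ : Matrix (Fin d × Fin d) (Fin d × Fin d) ℂ)
    (A0 A1 B0 B1 : Matrix (Fin d) (Fin d) ℂ) :
    tiltedCHBell τ (ρ.submatrix Prod.swap Prod.swap) B0 B1 A0 A1 =
      tiltedCHBell τ ρ A0 A1 B0 B1 := by
  simp only [tiltedCHBell_eq_jointProb, jointProb_submatrix_swap]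
  ring

-- Commuting effects have the joint measurement `A0 A1`, `A0 (1 - A1)`, `(1 - A0) A1`,
-- `(1 - A0) (1 - A1)`; conditioned on its outcome, both of Alice's answers are predetermined.
theorem tiltedCHBell_nonpos_of_commute (hρ : ρ.PosSemidef) (hτ : 1 ≤ τ)
    (hA0 : IsPOVMElem A0) (hA1 : IsPOVMElem A1) (hB0 : IsPOVMElem B0) (hB1 : IsPOVMElem B1)
    (hA : Commute A0 A1) : tiltedCHBell τ ρ A0 A1 B0 B1 ≤ 0 := by
  have posSemidef_mul {X Y : Matrix (Fin d) (Fin d) ℂ} (hX : X.PosSemidef) (hY : Y.PosSemidef)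
      (h : Commute X Y) : (X * Y).PosSemidef :=
    (h.mul_nonneg hX.nonneg hY.nonneg).posSemidef
  have hA0' : Commute (1 - A0) A1 := (Commute.one_left A1).sub_left hA
  have bell_eq : tiltedCHBell τ ρ A0 A1 B0 B1 =
      -((τ - 1) * jointProb ρ A0 1 + (τ - 1) * jointProb ρ 1 B0
        + jointProb ρ (A0 * A1) (1 - B0) + jointProb ρ (A0 * (1 - A1)) (1 - B1)
        + jointProb ρ ((1 - A0) * A1) B1 + jointProb ρ ((1 - A0) * (1 - A1)) B0) := by
    simp only [tiltedCHBell_eq_jointProb, mul_sub, sub_mul, mul_one, one_mul, map_sub,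
      LinearMap.sub_apply]
    ring
  have tilt_A0 := mul_nonneg (sub_nonneg.mpr hτ) (jointProb_nonneg hρ hA0.1 PosSemidef.one)
  have tilt_B0 := mul_nonneg (sub_nonneg.mpr hτ) (jointProb_nonneg hρ PosSemidef.one hB0.1)
  have joint₁₁ := jointProb_nonneg hρ (posSemidef_mul hA0.1 hA1.1 hA) hB0.2
  have joint₁₀ := jointProb_nonneg hρ
    (posSemidef_mul hA0.1 hA1.2 ((Commute.one_right A0).sub_right hA)) hB1.2
  have joint₀₁ := jointProb_nonneg hρ (posSemidef_mul hA0.2 hA1.1 hA0') hB1.1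
  have joint₀₀ := jointProb_nonneg hρ
    (posSemidef_mul hA0.2 hA1.2 ((Commute.one_right _).sub_right hA0')) hB0.1
  linarith

theorem convex_setOf_tiltedCHBell_le (τ M : ℝ) (ρ : Matrix (Fin d × Fin d) (Fin d × Fin d) ℂ)
    (B0 B1 : Matrix (Fin d) (Fin d) ℂ) :
    Convex ℝ {A : Matrix (Fin d) (Fin d) ℂ × Matrix (Fin d) (Fin d) ℂ |
      tiltedCHBell τ ρ A.1 A.2 B0 B1 ≤ M} := by
  let L : Matrix (Fin d) (Fin d) ℂ × Matrix (Fin d) (Fin d) ℂ →ₗ[ℝ] ℝ :=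
    ((jointProb ρ).flip (B0 + B1 - τ • 1)).coprod ((jointProb ρ).flip (B0 - B1))
  have bell_eq (A : Matrix (Fin d) (Fin d) ℂ × Matrix (Fin d) (Fin d) ℂ) :
      tiltedCHBell τ ρ A.1 A.2 B0 B1 = L A - τ * jointProb ρ 1 B0 := by
    simp only [tiltedCHBell_eq_jointProb, L, LinearMap.coprod_apply, map_add, map_sub, map_smul,
      LinearMap.add_apply, LinearMap.sub_apply, LinearMap.smul_apply, LinearMap.flip_apply,
      smul_eq_mul]
    ring
  simpa only [bell_eq, sub_le_iff_le_add] using convex_halfSpace_le L.isLinear _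

end LocalBound

section Chsh

variable {F G : Type*} [NormedAddCommGroup F] [InnerProductSpace ℝ F]
  [NormedAddCommGroup G] [InnerProductSpace ℝ G]

theorem real_inner_sq_add_inner_sq_le {e e' : F} (horth : ⟪e, e'⟫ = 0) (he : ‖e‖ ≤ 1)
    (he' : ‖e'‖ ≤ 1) (w : F) : ⟪e, w⟫ ^ 2 + ⟪e', w⟫ ^ 2 ≤ ‖w‖ ^ 2 := by
  have expand : ‖w - (⟪e, w⟫ • e + ⟪e', w⟫ • e')‖ ^ 2 =
      ‖w‖ ^ 2 - 2 * (⟪e, w⟫ ^ 2 + ⟪e', w⟫ ^ 2) + (⟪e, w⟫ * ‖e‖) ^ 2 + (⟪e', w⟫ * ‖e'‖) ^ 2 := by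
    simp only [norm_sub_sq_real, norm_add_sq_real, inner_add_right, inner_smul_left,
      inner_smul_right, horth, norm_smul, mul_pow, Real.norm_eq_abs, sq_abs, conj_trivial,
      real_inner_comm e w, real_inner_comm e' w]
    ring
  have shrink (c : ℝ) {v : F} (hv : ‖v‖ ≤ 1) : (c * ‖v‖) ^ 2 ≤ c ^ 2 := by
    rw [mul_pow]
    exact mul_le_of_le_one_right (sq_nonneg c) (pow_le_one₀ (norm_nonneg v) hv)
  linarith [sq_nonneg ‖w - (⟪e, w⟫ • e + ⟪e', w⟫ • e')‖, shrink ⟪e, w⟫ he, shrink ⟪e', w⟫ he']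

-- Horodecki's criterion: `b0 + b1` and `b0 - b1` are orthogonal with squared lengths summing to 4,
-- so only the action of `T` on orthogonal pairs of directions matters.
theorem chsh_inner_le_two_mul_sqrt (T : F →ₗ[ℝ] G) {κ : ℝ}
    (hT : ∀ e e' : F, ⟪e, e'⟫ = 0 → ‖e‖ ≤ 1 → ‖e'‖ ≤ 1 → ‖T e‖ ^ 2 + ‖T e'‖ ^ 2 ≤ κ)
    {a0 a1 : G} {b0 b1 : F} (ha0 : ‖a0‖ ≤ 1) (ha1 : ‖a1‖ ≤ 1) (hb0 : ‖b0‖ = 1) (hb1 : ‖b1‖ = 1) :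
    ⟪a0, T b0⟫ + ⟪a0, T b1⟫ + ⟪a1, T b0⟫ - ⟪a1, T b1⟫ ≤ 2 * √κ := by
  set u := b0 + b1
  set v := b0 - b1
  set e := NormedSpace.normalize u
  set e' := NormedSpace.normalize v
  have norm_normalize_le (w : F) : ‖NormedSpace.normalize w‖ ≤ 1 := by
    rcases eq_or_ne w 0 with rfl | hw
    · simp
    · exact (NormedSpace.norm_normalize hw).le
  have norm_map (w : F) : ‖T w‖ = ‖w‖ * ‖T (NormedSpace.normalize w)‖ := by
    conv_lhs => rw [← NormedSpace.norm_smul_normalize w, map_smul, norm_smul, norm_norm]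
  have orthogonal : ⟪e, e'⟫ = 0 := by
    have : ⟪u, v⟫ = 0 := (real_inner_add_sub_eq_zero_iff b0 b1).mpr (hb0.trans hb1.symm)
    simp [e, e', NormedSpace.normalize, inner_smul_left, inner_smul_right, this]
  have parallelogram : ‖u‖ ^ 2 + ‖v‖ ^ 2 = 2 ^ 2 := by
    have := parallelogram_law_with_norm ℝ b0 b1
    rw [hb0, hb1] at this
    linarith
  have inner_le {a w : G} (ha : ‖a‖ ≤ 1) : ⟪a, w⟫ ≤ ‖w‖ :=
    (real_inner_le_norm a w).trans (mul_le_of_le_one_left (norm_nonneg w) ha)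
  calc ⟪a0, T b0⟫ + ⟪a0, T b1⟫ + ⟪a1, T b0⟫ - ⟪a1, T b1⟫
      = ⟪a0, T u⟫ + ⟪a1, T v⟫ := by
        simp only [u, v, map_add, map_sub, inner_add_right, inner_sub_right]; ring
    _ ≤ ‖T u‖ + ‖T v‖ := add_le_add (inner_le ha0) (inner_le ha1)
    _ = ‖u‖ * ‖T e‖ + ‖v‖ * ‖T e'‖ := by rw [norm_map u, norm_map v]
    _ ≤ √(‖u‖ ^ 2 + ‖v‖ ^ 2) * √(‖T e‖ ^ 2 + ‖T e'‖ ^ 2) := by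
        simpa using Real.sum_mul_le_sqrt_mul_sqrt Finset.univ ![‖u‖, ‖v‖] ![‖T e‖, ‖T e'‖]
    _ ≤ 2 * √κ := by
        rw [parallelogram, Real.sqrt_sq zero_le_two]
        gcongr
        exact hT e e' orthogonal (norm_normalize_le u) (norm_normalize_le v)

end Chsh

section Bloch

/-- The operator `(1 + v · σ) / 2` on `ℂ²`, with `σ` the Pauli matrices; for a unit vector `v` it is
the rank-one projection with Bloch vector `v`. -/
noncomputable def blochProj (v : EuclideanSpace ℝ (Fin 3)) : Matrix (Fin 2) (Fin 2) ℂ :=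
  !![(1 + v 2) / 2, (v 0 - v 1 * Complex.I) / 2; (v 0 + v 1 * Complex.I) / 2, (1 - v 2) / 2]

/-- The Bloch vector of a Hermitian `A` on `ℂ²`: the `v` with `A = (tr A + v · σ) / 2`. -/
noncomputable def blochVec (A : Matrix (Fin 2) (Fin 2) ℂ) : EuclideanSpace ℝ (Fin 3) :=
  !₂[2 * (A 1 0).re, 2 * (A 1 0).im, (A 0 0).re - (A 1 1).re]

theorem blochVec_one_sub (A : Matrix (Fin 2) (Fin 2) ℂ) : blochVec (1 - A) = -blochVec A := by
  ext i; fin_cases i <;> simp [blochVec]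

theorem blochProj_neg (v : EuclideanSpace ℝ (Fin 3)) : blochProj (-v) = 1 - blochProj v := by
  ext i j; fin_cases i <;> fin_cases j <;> simp [blochProj] <;> ring

theorem posSemidef_blochProj {v : EuclideanSpace ℝ (Fin 3)} (hv : ‖v‖ = 1) :
    (blochProj v).PosSemidef := by
  have norm_sq : (v 0 : ℂ) ^ 2 + (v 1 : ℂ) ^ 2 + (v 2 : ℂ) ^ 2 = 1 := by
    have := EuclideanSpace.real_norm_sq_eq v
    rw [hv, Fin.sum_univ_three] at this
    exact_mod_cast (this.symm.trans (one_pow 2))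
  have conjTranspose_mul_self : (blochProj v)ᴴ * blochProj v = blochProj v := by
    ext i j
    fin_cases i <;> fin_cases j <;>
      simp only [blochProj, mul_apply, conjTranspose_apply, of_apply, cons_val, cons_val',
        Fin.zero_eta, Fin.mk_one, Fin.sum_univ_two, Fin.isValue, RCLike.star_def, map_div₀, map_add,
        map_sub, map_mul, map_one, map_ofNat, Complex.conj_ofReal, Complex.conj_I]
    · linear_combination norm_sq / 4 - v 1 ^ 2 / 4 * Complex.I_sq
    · ring
    · ring
    · linear_combination norm_sq / 4 - v 1 ^ 2 / 4 * Complex.I_sq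
  rw [← conjTranspose_mul_self]
  exact posSemidef_conjTranspose_mul_self _

theorem isPOVMElem_blochProj {v : EuclideanSpace ℝ (Fin 3)} (hv : ‖v‖ = 1) :
    IsPOVMElem (blochProj v) :=
  ⟨posSemidef_blochProj hv, blochProj_neg v ▸ posSemidef_blochProj (by rwa [norm_neg])⟩

theorem eq_smul_one_add_smul_blochProj {A : Matrix (Fin 2) (Fin 2) ℂ} (hA : A.IsHermitian)
    {r : ℝ} {v : EuclideanSpace ℝ (Fin 3)} (hv : blochVec A = r • v) :
    A = ((A.trace.re - r) / 2) • (1 : Matrix (Fin 2) (Fin 2) ℂ) + r • blochProj v := by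
  have coord (i : Fin 3) : ((blochVec A i : ℝ) : ℂ) = r * v i := by simp [hv]
  have hx : 2 * ((A 1 0).re : ℂ) = r * v 0 := by simpa [blochVec] using coord 0
  have hy : 2 * ((A 1 0).im : ℂ) = r * v 1 := by simpa [blochVec] using coord 1
  have hz : ((A 0 0).re : ℂ) - (A 1 1).re = r * v 2 := by simpa [blochVec] using coord 2
  have diag₀ : ((A 0 0).re : ℂ) = A 0 0 := hA.coe_re_apply_self 0
  have diag₁ : ((A 1 1).re : ℂ) = A 1 1 := hA.coe_re_apply_self 1
  have lower : (A 1 0).re + (A 1 0).im * Complex.I = A 1 0 := Complex.re_add_im (A 1 0)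
  have upper : (A 1 0).re - (A 1 0).im * Complex.I = A 0 1 := by
    rw [← hA.apply 0 1]
    apply Complex.ext <;> simp
  ext i j
  fin_cases i <;> fin_cases j <;>
    simp only [blochProj, trace_fin_two, Matrix.add_apply, Matrix.smul_apply, one_apply, of_apply,
      cons_val, cons_val', Complex.real_smul, Complex.add_re, Complex.ofReal_div,
      Complex.ofReal_sub, Complex.ofReal_add, Complex.ofReal_ofNat, Fin.zero_eta, Fin.mk_one,
      Fin.isValue, zero_ne_one, one_ne_zero, if_true, if_false]
  · linear_combination hz / 2 - diag₀
  · linear_combination hx / 2 - hy / 2 * Complex.I - upper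
  · linear_combination hx / 2 + hy / 2 * Complex.I - lower
  · linear_combination -hz / 2 - diag₁

theorem norm_blochVec_sq {A : Matrix (Fin 2) (Fin 2) ℂ} (hA : A.IsHermitian) :
    ‖blochVec A‖ ^ 2 = A.trace.re ^ 2 - 4 * A.det.re := by
  rw [EuclideanSpace.real_norm_sq_eq, Fin.sum_univ_three, det_fin_two, trace_fin_two,
    ← hA.coe_re_apply_self 0, ← hA.coe_re_apply_self 1, ← hA.apply 0 1]
  simp only [blochVec, cons_val, RCLike.re_to_complex, RCLike.star_def, Complex.coe_algebraMap,
    Complex.add_re, Complex.sub_re, Complex.mul_re, Complex.ofReal_re, Complex.ofReal_im,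
    Complex.conj_re, Complex.conj_im]
  ring

theorem norm_blochVec_le_trace {A : Matrix (Fin 2) (Fin 2) ℂ} (hA : A.PosSemidef) :
    ‖blochVec A‖ ≤ A.trace.re := by
  have trace_nonneg : 0 ≤ A.trace.re := (Complex.le_def.mp hA.trace_nonneg).1
  have det_nonneg : 0 ≤ A.det.re := (Complex.le_def.mp hA.det_nonneg).1
  refine le_of_sq_le_sq ?_ trace_nonneg
  linarith [norm_blochVec_sq hA.isHermitian]

/-- The effects `0`, `1` and all rank-one projections on `ℂ²`: the extreme points of the convex set
of POVM elements. -/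
def extremeEffects : Set (Matrix (Fin 2) (Fin 2) ℂ) :=
  {0, 1} ∪ blochProj '' Metric.sphere 0 1

theorem isPOVMElem_of_mem_extremeEffects {A : Matrix (Fin 2) (Fin 2) ℂ}
    (hA : A ∈ extremeEffects) : IsPOVMElem A := by
  rcases hA with (rfl | rfl) | ⟨v, hv, rfl⟩
  exacts [isPOVMElem_zero, isPOVMElem_one, isPOVMElem_blochProj (mem_sphere_zero_iff_norm.mp hv)]

theorem commute_or_eq_blochProj_of_mem_extremeEffects {A A' : Matrix (Fin 2) (Fin 2) ℂ}
    (hA : A ∈ extremeEffects) (hA' : A' ∈ extremeEffects) :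
    Commute A A' ∨ ∃ a a', ‖a‖ = 1 ∧ ‖a'‖ = 1 ∧ A = blochProj a ∧ A' = blochProj a' := by
  rcases hA with (rfl | rfl) | ⟨a, ha, rfl⟩
  · exact .inl (Commute.zero_left A')
  · exact .inl (Commute.one_left A')
  rcases hA' with (rfl | rfl) | ⟨a', ha', rfl⟩
  · exact .inl (Commute.zero_right _)
  · exact .inl (Commute.one_right _)
  · exact .inr ⟨a, a', mem_sphere_zero_iff_norm.mp ha, mem_sphere_zero_iff_norm.mp ha', rfl, rfl⟩

theorem IsPOVMElem.mem_convexHull_extremeEffects {A : Matrix (Fin 2) (Fin 2) ℂ}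
    (hA : IsPOVMElem A) : A ∈ convexHull ℝ extremeEffects := by
  obtain ⟨v, hv, hAv⟩ : ∃ v : EuclideanSpace ℝ (Fin 3),
      ‖v‖ = 1 ∧ blochVec A = ‖blochVec A‖ • v := by
    rcases eq_or_ne (blochVec A) 0 with h | h
    · exact ⟨EuclideanSpace.single 0 1, by simp, by simp [h]⟩
    · exact ⟨_, NormedSpace.norm_normalize h, (NormedSpace.norm_smul_normalize _).symm⟩
  set r := ‖blochVec A‖
  set t := A.trace.re
  have le_trace : r ≤ t := norm_blochVec_le_trace hA.1
  have le_two_sub_trace : r ≤ 2 - t := by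
    simpa [blochVec_one_sub] using norm_blochVec_le_trace hA.2
  have decomposition :
      A = (1 - (t + r) / 2) • (0 : Matrix (Fin 2) (Fin 2) ℂ) + ((t - r) / 2) • 1
        + r • blochProj v := by
    rw [smul_zero, zero_add]
    exact eq_smul_one_add_smul_blochProj hA.1.isHermitian hAv
  have zero_mem : 0 ∈ extremeEffects := .inl (.inl rfl)
  have one_mem : 1 ∈ extremeEffects := .inl (.inr rfl)
  have proj_mem : blochProj v ∈ extremeEffects :=
    .inr ⟨v, mem_sphere_zero_iff_norm.mpr hv, rfl⟩
  rw [decomposition]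
  refine mem_convexHull_of_exists_fintype ![1 - (t + r) / 2, (t - r) / 2, r]
    ![0, 1, blochProj v] ?_ ?_ ?_ ?_
  · intro i
    fin_cases i
    exacts [by dsimp; linarith, by dsimp; linarith, norm_nonneg _]
  · simp only [Fin.sum_univ_three, cons_val]
    ring
  · intro i
    fin_cases i
    exacts [zero_mem, one_mem, proj_mem]
  · simp only [Fin.sum_univ_three, cons_val]

theorem tiltedCHBell_le_of_forall_blochProj_left {ρ : Matrix (Fin 2 × Fin 2) (Fin 2 × Fin 2) ℂ}
    (hρ : ρ.PosSemidef) {τ M : ℝ} (hτ : 1 ≤ τ) (hM : 0 ≤ M)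
    {A0 A1 B0 B1 : Matrix (Fin 2) (Fin 2) ℂ}
    (hA0 : IsPOVMElem A0) (hA1 : IsPOVMElem A1) (hB0 : IsPOVMElem B0) (hB1 : IsPOVMElem B1)
    (h : ∀ a0 a1 : EuclideanSpace ℝ (Fin 3), ‖a0‖ = 1 → ‖a1‖ = 1 →
      tiltedCHBell τ ρ (blochProj a0) (blochProj a1) B0 B1 ≤ M) :
    tiltedCHBell τ ρ A0 A1 B0 B1 ≤ M := by
  have bound_extreme : extremeEffects ×ˢ extremeEffects ⊆
      {A | tiltedCHBell τ ρ A.1 A.2 B0 B1 ≤ M} := by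
    rintro ⟨A, A'⟩ ⟨hA, hA'⟩
    rcases commute_or_eq_blochProj_of_mem_extremeEffects hA hA' with
      hcomm | ⟨a, a', ha, ha', rfl, rfl⟩
    · exact (tiltedCHBell_nonpos_of_commute hρ hτ (isPOVMElem_of_mem_extremeEffects hA)
        (isPOVMElem_of_mem_extremeEffects hA') hB0 hB1 hcomm).trans hM
    · exact h a a' ha ha'
  have mem_hull : (A0, A1) ∈ convexHull ℝ (extremeEffects ×ˢ extremeEffects) :=
    mk_mem_convexHull_prod hA0.mem_convexHull_extremeEffects hA1.mem_convexHull_extremeEffects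
  simpa only [Set.mem_ofPred_eq] using
    convexHull_min bound_extreme (convex_setOf_tiltedCHBell_le τ M ρ B0 B1) mem_hull

theorem tiltedCHBell_le_of_forall_blochProj {ρ : Matrix (Fin 2 × Fin 2) (Fin 2 × Fin 2) ℂ}
    (hρ : ρ.PosSemidef) {τ M : ℝ} (hτ : 1 ≤ τ) (hM : 0 ≤ M)
    {A0 A1 B0 B1 : Matrix (Fin 2) (Fin 2) ℂ}
    (hA0 : IsPOVMElem A0) (hA1 : IsPOVMElem A1) (hB0 : IsPOVMElem B0) (hB1 : IsPOVMElem B1)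
    (h : ∀ a0 a1 b0 b1 : EuclideanSpace ℝ (Fin 3), ‖a0‖ = 1 → ‖a1‖ = 1 → ‖b0‖ = 1 → ‖b1‖ = 1 →
      tiltedCHBell τ ρ (blochProj a0) (blochProj a1) (blochProj b0) (blochProj b1) ≤ M) :
    tiltedCHBell τ ρ A0 A1 B0 B1 ≤ M := by
  refine tiltedCHBell_le_of_forall_blochProj_left hρ hτ hM hA0 hA1 hB0 hB1 fun a0 a1 ha0 ha1 => ?_
  rw [← tiltedCHBell_submatrix_swap]
  refine tiltedCHBell_le_of_forall_blochProj_left (hρ.submatrix Prod.swap) hτ hM hB0 hB1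
    (isPOVMElem_blochProj ha0) (isPOVMElem_blochProj ha1) fun b0 b1 hb0 hb1 => ?_
  rw [tiltedCHBell_submatrix_swap]
  exact h a0 a1 b0 b1 ha0 ha1 hb0 hb1

end Bloch

section Schmidt

theorem posSemidef_schmidtState (γ : ℝ) : (schmidtState γ).PosSemidef :=
  posSemidef_vecMulVec_self_star (schmidtVec γ)

/-- The correlation tensor of `ρ_γ`: `⟪a, schmidtCorrelation γ b⟫` is the expectation of
`(a · σ) ⊗ (b · σ)`. -/
noncomputable def schmidtCorrelation (γ : ℝ) :
    EuclideanSpace ℝ (Fin 3) →ₗ[ℝ] EuclideanSpace ℝ (Fin 3) :=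
  toEuclideanLin (diagonal ![Real.sin (2 * γ), -Real.sin (2 * γ), 1])

theorem jointProb_schmidtState (γ : ℝ) (A B : Matrix (Fin 2) (Fin 2) ℂ) :
    jointProb (schmidtState γ) A B =
      Real.cos γ ^ 2 * (A 0 0 * B 0 0).re + Real.sin γ ^ 2 * (A 1 1 * B 1 1).re +
        Real.cos γ * Real.sin γ * (A 0 1 * B 0 1 + A 1 0 * B 1 0).re := by
  have vec₀₀ : schmidtVec γ (0, 0) = (Real.cos γ : ℂ) := rfl
  have vec₀₁ : schmidtVec γ (0, 1) = 0 := rfl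
  have vec₁₀ : schmidtVec γ (1, 0) = 0 := rfl
  have vec₁₁ : schmidtVec γ (1, 1) = (Real.sin γ : ℂ) := rfl
  rw [jointProb_apply, schmidtState, vecMulVec_mul, trace_vecMulVec]
  simp only [dotProduct, vecMul, Fintype.sum_prod_type, Fin.sum_univ_two, vec₀₀, vec₀₁, vec₁₀,
    vec₁₁, kroneckerMap_apply, map_zero, Complex.conj_ofReal, zero_mul, add_zero, zero_add,
    Complex.add_re, Complex.re_ofReal_mul]
  ring

theorem jointProb_schmidtState_blochProj (γ : ℝ) (a b : EuclideanSpace ℝ (Fin 3)) :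
    jointProb (schmidtState γ) (blochProj a) (blochProj b) =
      (1 + Real.cos (2 * γ) * (a 2 + b 2) + ⟪a, schmidtCorrelation γ b⟫) / 4 := by
  rw [jointProb_schmidtState]
  have inner_eq : ⟪a, schmidtCorrelation γ b⟫ =
      Real.sin (2 * γ) * (a 0 * b 0 - a 1 * b 1) + a 2 * b 2 := by
    simp only [schmidtCorrelation, toLpLin_apply, PiLp.inner_apply, Fin.sum_univ_three,
      mulVec_diagonal, RCLike.inner_apply, conj_trivial, cons_val]
    ring
  have re₀₀ : (blochProj a 0 0 * blochProj b 0 0).re = (1 + a 2) * (1 + b 2) / 4 := by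
    simp [blochProj]; ring
  have re₁₁ : (blochProj a 1 1 * blochProj b 1 1).re = (1 - a 2) * (1 - b 2) / 4 := by
    simp [blochProj]; ring
  have re_off : (blochProj a 0 1 * blochProj b 0 1 + blochProj a 1 0 * blochProj b 1 0).re =
      (a 0 * b 0 - a 1 * b 1) / 2 := by
    simp [blochProj]; ring
  rw [re₀₀, re₁₁, re_off, inner_eq, Real.cos_two_mul', Real.sin_two_mul]
  linear_combination (1 + a 2 * b 2) / 4 * Real.cos_sq_add_sin_sq γ

theorem tiltedCHBell_schmidtState_blochProj (γ τ : ℝ) (a0 a1 b0 b1 : EuclideanSpace ℝ (Fin 3)) :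
    tiltedCHBell τ (schmidtState γ) (blochProj a0) (blochProj a1) (blochProj b0) (blochProj b1) =
      (1 - τ) * (1 + Real.cos (2 * γ) * ((a0 2 + b0 2) / 2))
      + ((⟪a0, schmidtCorrelation γ b0⟫ + ⟪a0, schmidtCorrelation γ b1⟫
        + ⟪a1, schmidtCorrelation γ b0⟫ - ⟪a1, schmidtCorrelation γ b1⟫) / 2 - 1) / 2 := by
  have one_eq (v : EuclideanSpace ℝ (Fin 3)) : 1 = blochProj v + blochProj (-v) := by
    rw [blochProj_neg, add_sub_cancel]
  rw [tiltedCHBell_eq_jointProb, one_eq 0]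
  simp only [jointProb_schmidtState_blochProj, neg_zero, map_add, map_zero, LinearMap.add_apply,
    PiLp.zero_apply, inner_zero_left, inner_zero_right, add_zero, zero_add]
  ring

theorem norm_schmidtCorrelation_sq_add_le (γ : ℝ) {e e' : EuclideanSpace ℝ (Fin 3)}
    (horth : ⟪e, e'⟫ = 0) (he : ‖e‖ ≤ 1) (he' : ‖e'‖ ≤ 1) :
    ‖schmidtCorrelation γ e‖ ^ 2 + ‖schmidtCorrelation γ e'‖ ^ 2 ≤ 1 + Real.sin (2 * γ) ^ 2 := by
  have norm_sq (w : EuclideanSpace ℝ (Fin 3)) : ‖schmidtCorrelation γ w‖ ^ 2 =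
      Real.sin (2 * γ) ^ 2 * ‖w‖ ^ 2 + (1 - Real.sin (2 * γ) ^ 2) * (w 2) ^ 2 := by
    simp only [EuclideanSpace.real_norm_sq_eq, Fin.sum_univ_three, schmidtCorrelation,
      toLpLin_apply, mulVec_diagonal, cons_val]
    ring
  have bessel : e 2 ^ 2 + e' 2 ^ 2 ≤ 1 := by
    simpa [EuclideanSpace.inner_single_right] using
      real_inner_sq_add_inner_sq_le horth he he' (EuclideanSpace.single 2 1)
  have he_sq : ‖e‖ ^ 2 ≤ 1 := pow_le_one₀ (norm_nonneg e) he
  have he'_sq : ‖e'‖ ^ 2 ≤ 1 := pow_le_one₀ (norm_nonneg e') he'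
  have one_sub_sin_sq_nonneg : 0 ≤ 1 - Real.sin (2 * γ) ^ 2 :=
    sub_nonneg.mpr (Real.sin_sq_le_one _)
  calc ‖schmidtCorrelation γ e‖ ^ 2 + ‖schmidtCorrelation γ e'‖ ^ 2
      = Real.sin (2 * γ) ^ 2 * (‖e‖ ^ 2 + ‖e'‖ ^ 2)
        + (1 - Real.sin (2 * γ) ^ 2) * (e 2 ^ 2 + e' 2 ^ 2) := by
        rw [norm_sq, norm_sq]; ring
    _ ≤ Real.sin (2 * γ) ^ 2 * (1 + 1) + (1 - Real.sin (2 * γ) ^ 2) * 1 := by gcongr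
    _ = 1 + Real.sin (2 * γ) ^ 2 := by ring

theorem two_mul_min_sin_sq_cos_sq_le (γ : ℝ) {w : ℝ} (hw : |w| ≤ 1) :
    2 * min (Real.sin γ ^ 2) (Real.cos γ ^ 2) ≤ 1 + Real.cos (2 * γ) * w := by
  obtain ⟨neg_one_le, le_one⟩ := abs_le.mp hw
  calc 2 * min (Real.sin γ ^ 2) (Real.cos γ ^ 2)
      = min (Real.sin γ ^ 2) (Real.cos γ ^ 2) * (1 + w)
        + min (Real.sin γ ^ 2) (Real.cos γ ^ 2) * (1 - w) := by ring
    _ ≤ Real.cos γ ^ 2 * (1 + w) + Real.sin γ ^ 2 * (1 - w) := by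
        gcongr
        exacts [by linarith, min_le_right _ _, min_le_left _ _]
    _ = 1 + Real.cos (2 * γ) * w := by
        rw [Real.cos_two_mul']
        linear_combination Real.cos_sq_add_sin_sq γ

theorem tiltedCHBell_schmidtState_blochProj_le (γ : ℝ) {τ : ℝ} (hτ : 1 ≤ τ)
    {a0 a1 b0 b1 : EuclideanSpace ℝ (Fin 3)}
    (ha0 : ‖a0‖ = 1) (ha1 : ‖a1‖ = 1) (hb0 : ‖b0‖ = 1) (hb1 : ‖b1‖ = 1) :
    tiltedCHBell τ (schmidtState γ) (blochProj a0) (blochProj a1) (blochProj b0) (blochProj b1) ≤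
      2 * (1 - τ) * min (Real.sin γ ^ 2) (Real.cos γ ^ 2) +
        (√(1 + Real.sin (2 * γ) ^ 2) - 1) / 2 := by
  have chsh_le := chsh_inner_le_two_mul_sqrt (schmidtCorrelation γ)
    (fun _ _ => norm_schmidtCorrelation_sq_add_le γ) ha0.le ha1.le hb0 hb1
  have abs_mean_le : |(a0 2 + b0 2) / 2| ≤ 1 := by
    have ha := PiLp.norm_apply_le a0 2
    have hb := PiLp.norm_apply_le b0 2
    rw [Real.norm_eq_abs] at ha hb
    rw [abs_div, abs_two]
    linarith [abs_add_le (a0 2) (b0 2)]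
  have tilt_le := mul_le_mul_of_nonpos_left (two_mul_min_sin_sq_cos_sq_le γ abs_mean_le)
    (sub_nonpos.mpr hτ)
  rw [tiltedCHBell_schmidtState_blochProj]
  linarith

end Schmidt

theorem sin_sq_le_cos_sq_of_abs_le_pi_div_four {γ : ℝ} (hγ : |γ| ≤ Real.pi / 4) :
    Real.sin γ ^ 2 ≤ Real.cos γ ^ 2 := by
  obtain ⟨neg_le, le⟩ := abs_le.mp hγ
  rw [← sub_nonneg, ← Real.cos_two_mul']
  exact Real.cos_nonneg_of_neg_pi_div_two_le_of_le (by linarith) (by linarith)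

theorem tiltedCHBell_schmidt_upper_bound_general (γ : ℝ) (τ : ℝ) (hτ : 1 ≤ τ)
    (A0 A1 B0 B1 : Matrix (Fin 2) (Fin 2) ℂ)
    (hA0 : IsPOVMElem A0) (hA1 : IsPOVMElem A1) (hB0 : IsPOVMElem B0) (hB1 : IsPOVMElem B1) :
    tiltedCHBell τ (schmidtState γ) A0 A1 B0 B1 ≤
      max 0 (2 * (1 - τ) * min (Real.sin γ ^ 2) (Real.cos γ ^ 2) +
        (√(1 + Real.sin (2 * γ) ^ 2) - 1) / 2) :=
  tiltedCHBell_le_of_forall_blochProj (posSemidef_schmidtState γ) hτ (le_max_left _ _)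
    hA0 hA1 hB0 hB1 fun _ _ _ _ ha0 ha1 hb0 hb1 =>
      le_max_of_le_right (tiltedCHBell_schmidtState_blochProj_le γ hτ ha0 ha1 hb0 hb1)

/-- for `γ ∈ [0, π/4]`, `τ ≥ 1`, and arbitrary POVM elements, the
tilted-CH Bell value of `|ψ^γ⟩` is bounded by
`max {0, 2(1−τ)sin²γ + (√(1 + sin²2γ) − 1)/2}`. -/
theorem tiltedCHBell_schmidt_upper_bound
    (γ : ℝ) (hγ₀ : 0 ≤ γ) (hγ₁ : γ ≤ Real.pi / 4)
    (τ : ℝ) (hτ : 1 ≤ τ)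
    (A0 A1 B0 B1 : Matrix (Fin 2) (Fin 2) ℂ)
    (hA0 : IsPOVMElem A0) (hA1 : IsPOVMElem A1)
    (hB0 : IsPOVMElem B0) (hB1 : IsPOVMElem B1) :
    tiltedCHBell τ (schmidtState γ) A0 A1 B0 B1 ≤
      max 0 (2 * (1 - τ) * Real.sin γ ^ 2 +
        (Real.sqrt (1 + Real.sin (2 * γ) ^ 2) - 1) / 2) := by
  simpa only [min_eq_left (sin_sq_le_cos_sq_of_abs_le_pi_div_four (abs_of_nonneg hγ₀ ▸ hγ₁))] using
    tiltedCHBell_schmidt_upper_bound_general γ τ hτ A0 A1 B0 B1 hA0 hA1 hB0 hB1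
end

section
/- Let τ satisfy 1/2 + 1/√2 ≤ τ < 3/2 and let γ ∈ [0, π/4]. If 2(1−τ)·sin²γ + (√(1 + sin²(2γ)) − 1)/2 > 0, then sin(2γ) ≤ C_τ, where C_τ = 2·√(2(τ−1)(2τ−1)(3−2τ)) / (5 − 8τ + 4τ²). -/
/-!
In terms of `c = cos 2γ`, the bound is positive when `1 + 2(τ - 1)(1 - c) < √(2 - c²)`. Both sides
agree at `c = 1`, so after squaring the factor `1 - c` splits off and what remains is linear in `c`:
for `τ ≥ 1` the bound is positive exactly when `c₀ < c < 1`, where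
`c₀ = (4τ² - 4τ - 1) / (5 - 8τ + 4τ²)`. The assumption `1/2 + 1/√2 ≤ τ` gives `c₀ ≥ 0`, so that
`c₀ < c` bounds `|sin 2γ| = √(1 - c²)` by `√(1 - c₀²)`, which is `C_τ`.
-/

open Real

/-- The upper bound on the quantum violation of the tilted-CH inequality `I^(τ)` by the two-qubit
pure state with Schmidt angle `γ`; a violation requires it to be positive. -/
noncomputable def tiltedCHBound (τ γ : ℝ) : ℝ :=
  2 * (1 - τ) * sin γ ^ 2 + (√(1 + sin (2 * γ) ^ 2) - 1) / 2

/-- The constant `C_τ`, an upper bound on the concurrence of the states that violate `I^(τ)`. For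
`τ > 3 / 2` the radicand is negative, and the value is `0` by the convention for `√`. -/
noncomputable def criticalConcurrence (τ : ℝ) : ℝ :=
  2 * √(2 * (τ - 1) * (2 * τ - 1) * (3 - 2 * τ)) / (5 - 8 * τ + 4 * τ ^ 2)

/-- For `1 ≤ τ < 3 / 2`, the value of `cos (2 * γ)` other than `1` at which `tiltedCHBound τ γ`
vanishes. -/
noncomputable def criticalCos (τ : ℝ) : ℝ :=
  (4 * τ ^ 2 - 4 * τ - 1) / (5 - 8 * τ + 4 * τ ^ 2)

lemma criticalCos_denom_pos (τ : ℝ) : 0 < 5 - 8 * τ + 4 * τ ^ 2 := by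
  linarith [sq_nonneg (τ - 1)]

lemma criticalCos_nonneg {τ : ℝ} (hτ : 2 ≤ (2 * τ - 1) ^ 2) : 0 ≤ criticalCos τ :=
  div_nonneg (by linarith) (criticalCos_denom_pos τ).le

lemma criticalConcurrence_eq_sqrt (τ : ℝ) :
    criticalConcurrence τ = √(1 - criticalCos τ ^ 2) := by
  have hD := criticalCos_denom_pos τ
  have hsq : 1 - criticalCos τ ^ 2 =
      2 ^ 2 * (2 * (τ - 1) * (2 * τ - 1) * (3 - 2 * τ)) / (5 - 8 * τ + 4 * τ ^ 2) ^ 2 := by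
    rw [criticalCos, div_pow, one_sub_div (pow_pos hD 2).ne']
    ring
  rw [hsq, sqrt_div' _ (sq_nonneg _), sqrt_sq hD.le, sqrt_mul (sq_nonneg 2), sqrt_sq zero_le_two,
    criticalConcurrence]

lemma tiltedCHBound_eq_cos (τ γ : ℝ) :
    tiltedCHBound τ γ =
      (√(2 - cos (2 * γ) ^ 2) - (1 + 2 * (τ - 1) * (1 - cos (2 * γ)))) / 2 := by
  rw [tiltedCHBound, sin_sq_eq_half_sub, sin_sq (2 * γ),
    show 1 + (1 - cos (2 * γ) ^ 2) = 2 - cos (2 * γ) ^ 2 by ring]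
  ring

lemma tiltedCHBound_pos_iff {τ γ : ℝ} (hτ : 1 ≤ τ) :
    0 < tiltedCHBound τ γ ↔ criticalCos τ < cos (2 * γ) ∧ cos (2 * γ) < 1 := by
  rw [tiltedCHBound_eq_cos, criticalCos, div_lt_iff₀ (criticalCos_denom_pos τ)]
  have hc : cos (2 * γ) ≤ 1 := cos_le_one _
  generalize cos (2 * γ) = c at hc ⊢
  have hleft : 0 ≤ 1 + 2 * (τ - 1) * (1 - c) := by
    have := mul_nonneg (sub_nonneg.2 hτ) (sub_nonneg.2 hc)
    linarith
  have hfactor : 2 - c ^ 2 - (1 + 2 * (τ - 1) * (1 - c)) ^ 2 =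
      (1 - c) * (c * (5 - 8 * τ + 4 * τ ^ 2) - (4 * τ ^ 2 - 4 * τ - 1)) := by
    ring
  rw [div_pos_iff_of_pos_right two_pos, sub_pos, lt_sqrt hleft, ← sub_pos, hfactor]
  constructor
  · intro h
    have hlt : 0 < 1 - c := (sub_nonneg.2 hc).lt_of_ne' (left_ne_zero_of_mul h.ne')
    exact ⟨sub_pos.1 (pos_of_mul_pos_right h hlt.le), sub_pos.1 hlt⟩
  · rintro ⟨hcrit, hlt⟩
    exact mul_pos (sub_pos.2 hlt) (sub_pos.2 hcrit)

theorem concurrence_le_C_tau_general {τ γ : ℝ} (hτ : 1 / 2 + 1 / √2 ≤ τ)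
    (hviol : 0 < tiltedCHBound τ γ) : |sin (2 * γ)| < criticalConcurrence τ := by
  have hsqrt : √2 ≤ 2 * τ - 1 := by
    rw [← sqrt_div_self'] at hτ
    linarith
  have hτ_one : 1 ≤ τ := by linarith [one_le_sqrt.2 one_le_two]
  have hnonneg : 0 ≤ criticalCos τ := criticalCos_nonneg ((sqrt_le_left (by linarith)).1 hsqrt)
  have hcos : criticalCos τ < cos (2 * γ) := ((tiltedCHBound_pos_iff hτ_one).1 hviol).1
  rw [abs_sin_eq_sqrt_one_sub_cos_sq, criticalConcurrence_eq_sqrt]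
  gcongr
  exact sub_nonneg.2 (cos_sq_le_one _)

/-- for `1/2 + 1/√2 ≤ τ < 3/2` and `γ ∈ [0, π/4]`, if
`2(1−τ)sin²γ + (√(1 + sin²2γ) − 1)/2 > 0` then the concurrence `sin 2γ` is at most
`C_τ = 2√(2(τ−1)(2τ−1)(3−2τ))/(5 − 8τ + 4τ²)`. -/
theorem concurrence_le_C_tau
    (τ : ℝ) (hτ₁ : 1 / 2 + 1 / Real.sqrt 2 ≤ τ) (hτ₂ : τ < 3 / 2)
    (γ : ℝ) (hγ₀ : 0 ≤ γ) (hγ₁ : γ ≤ Real.pi / 4)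
    (hviol : 0 < 2 * (1 - τ) * Real.sin γ ^ 2 +
      (Real.sqrt (1 + Real.sin (2 * γ) ^ 2) - 1) / 2) :
    Real.sin (2 * γ) ≤
      2 * Real.sqrt (2 * (τ - 1) * (2 * τ - 1) * (3 - 2 * τ)) /
        (5 - 8 * τ + 4 * τ ^ 2) :=
  (le_abs_self _).trans (concurrence_le_C_tau_general hτ₁ hviol).le
end

section
/- Let τ ≥ 1/2 + 1/√2 and let A₀,A₁,B₀,B₁ be arbitrary POVM elements on ℂ². Then the two-qubit maximally entangled state |ψ^{π/4}⟩ = (e₀⊗e₀ + e₁⊗e₁)/√2 does not violate the tilted-CH inequality: S^(τ)(ρ_{π/4}; A₀,A₁,B₀,B₁) ≤ 0. -/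
open Matrix
open scoped Kronecker ComplexOrder

/-!
The tilted-CH value is convex in Alice's pair of POVM elements and in Bob's, and every POVM element
is a convex combination of projections, so only projections matter. For projections, with
`aₓ = 2Aₓ - 1` and `b_y = 2B_y - 1`, the CH operator is `A₀ + B₀ + (CHSH - 2) / 4`, and
`CHSH² = 4 - [a₀, a₁][b₀, b₁]`. If one party's projections commute, then `CHSH ≤ 2` and the value is
nonpositive as soon as `τ ≥ 1`. Otherwise, on a qubit, all four projections have rank one, and
maximally mixed marginals give them probability `1 / 2`; Tsirelson's bound `CHSH ≤ 2√2` then bounds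
the value by `1 / 2 + 1 / √2 - τ`.
-/

open scoped MatrixOrder

section CHSH

variable {R : Type*} [Ring R]

theorem commute_two_mul_sub_one {p q : R} (h : Commute p q) :
    Commute (2 * p - 1) (2 * q - 1) := by
  have h2 : Commute (2 * p) (2 * q) := by
    simpa only [two_mul] using (h.add_left h).add_right (h.add_left h)
  exact (h2.sub_left (.one_left _)).sub_right (.one_right _)

theorem ch_eq_smul_chsh [Algebra ℝ R] (p₀ p₁ q₀ q₁ : R) :
    p₀ * q₀ + p₀ * q₁ + p₁ * q₀ - p₁ * q₁ - (p₀ + q₀) =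
      (1 / 4 : ℝ) • ((2 * p₀ - 1) * (2 * q₀ - 1) + (2 * p₀ - 1) * (2 * q₁ - 1) +
        (2 * p₁ - 1) * (2 * q₀ - 1) - (2 * p₁ - 1) * (2 * q₁ - 1) - 2) := by
  rw [one_div, eq_inv_smul_iff₀ four_ne_zero, ofNat_smul_eq_nsmul, nsmul_eq_mul]
  grind

variable [StarRing R]

theorem chsh_sq {A₀ A₁ B₀ B₁ : R} (T : IsCHSHTuple A₀ A₁ B₀ B₁) :
    (A₀ * B₀ + A₀ * B₁ + A₁ * B₀ - A₁ * B₁) ^ 2 =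
      4 - (A₀ * A₁ - A₁ * A₀) * (B₀ * B₁ - B₁ * B₀) := by
  have h₀₀ : Commute B₀ A₀ := T.A₀B₀_commutes.symm
  have h₀₁ : Commute B₁ A₀ := T.A₀B₁_commutes.symm
  have h₁₀ : Commute B₀ A₁ := T.A₁B₀_commutes.symm
  have h₁₁ : Commute B₁ A₁ := T.A₁B₁_commutes.symm
  simp only [sq, add_mul, sub_mul, mul_add, mul_sub, h₀₀.mul_mul_mul_comm, h₀₁.mul_mul_mul_comm,
    h₁₀.mul_mul_mul_comm, h₁₁.mul_mul_mul_comm]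
  simp only [← sq, T.A₀_inv, T.A₁_inv, T.B₀_inv, T.B₁_inv, one_mul, mul_one]
  grind

theorem isSelfAdjoint_chsh {A₀ A₁ B₀ B₁ : R} (T : IsCHSHTuple A₀ A₁ B₀ B₁) :
    IsSelfAdjoint (A₀ * B₀ + A₀ * B₁ + A₁ * B₀ - A₁ * B₁) := by
  simp only [isSelfAdjoint_iff, star_sub, star_add, star_mul, T.A₀_sa, T.A₁_sa, T.B₀_sa, T.B₁_sa,
    T.A₀B₀_commutes, T.A₀B₁_commutes, T.A₁B₀_commutes, T.A₁B₁_commutes]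

theorem isCHSHTuple_two_mul_sub_one {p₀ p₁ q₀ q₁ : R} (hp₀ : IsStarProjection p₀)
    (hp₁ : IsStarProjection p₁) (hq₀ : IsStarProjection q₀) (hq₁ : IsStarProjection q₁)
    (h₀₀ : Commute p₀ q₀) (h₀₁ : Commute p₀ q₁) (h₁₀ : Commute p₁ q₀) (h₁₁ : Commute p₁ q₁) :
    IsCHSHTuple (2 * p₀ - 1) (2 * p₁ - 1) (2 * q₀ - 1) (2 * q₁ - 1) := by
  have sa {p : R} (hp : IsStarProjection p) : star (2 * p - 1) = 2 * p - 1 := by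
    simp only [two_mul, star_sub, star_add, star_one, hp.isSelfAdjoint.star_eq]
  have inv {p : R} (hp : IsStarProjection p) : (2 * p - 1) ^ 2 = 1 := by
    simpa only [sa hp, ← sq] using Unitary.star_mul_self_of_mem hp.two_mul_sub_one_mem_unitary
  exact ⟨inv hp₀, inv hp₁, inv hq₀, inv hq₁, sa hp₀, sa hp₁, sa hq₀, sa hq₁,
    commute_two_mul_sub_one h₀₀, commute_two_mul_sub_one h₀₁, commute_two_mul_sub_one h₁₀,
    commute_two_mul_sub_one h₁₁⟩

variable [Algebra ℝ R] [PartialOrder R] [StarOrderedRing R] [IsOrderedModule ℝ R]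

theorem chsh_le_two_of_commute {A₀ A₁ B₀ B₁ : R} (T : IsCHSHTuple A₀ A₁ B₀ B₁)
    (h : Commute A₀ A₁ ∨ Commute B₀ B₁) :
    A₀ * B₀ + A₀ * B₁ + A₁ * B₀ - A₁ * B₁ ≤ 2 := by
  have hsq : (A₀ * B₀ + A₀ * B₁ + A₁ * B₀ - A₁ * B₁) ^ 2 = 4 := by
    rcases h with h | h <;>
      simp only [chsh_sq T, h.eq, sub_self, zero_mul, mul_zero, sub_zero]
  have hsa := isSelfAdjoint_chsh T
  generalize A₀ * B₀ + A₀ * B₁ + A₁ * B₀ - A₁ * B₁ = X at hsq hsa ⊢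
  have two_sub_eq : 2 - X = (1 / 4 : ℝ) • (star (2 - X) * (2 - X)) := by
    rw [one_div, eq_inv_smul_iff₀ four_ne_zero, star_sub, star_ofNat, hsa.star_eq,
      ofNat_smul_eq_nsmul, nsmul_eq_mul]
    calc (4 : ℕ) * (2 - X) = 4 - 4 * X + 4 := by push_cast; grind
      _ = 4 - 4 * X + X ^ 2 := by rw [hsq]
      _ = (2 - X) * (2 - X) := by grind
  rw [← sub_nonneg, two_sub_eq]
  exact smul_nonneg (by norm_num) (star_mul_self_nonneg _)

variable {p₀ p₁ q₀ q₁ : R}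

theorem ch_le_of_commute (T : IsCHSHTuple (2 * p₀ - 1) (2 * p₁ - 1) (2 * q₀ - 1) (2 * q₁ - 1))
    (h : Commute p₀ p₁ ∨ Commute q₀ q₁) :
    p₀ * q₀ + p₀ * q₁ + p₁ * q₀ - p₁ * q₁ ≤ p₀ + q₀ := by
  have hchsh := chsh_le_two_of_commute T (h.imp commute_two_mul_sub_one commute_two_mul_sub_one)
  rw [← sub_nonpos, ch_eq_smul_chsh]
  exact smul_nonpos_of_nonneg_of_nonpos (by norm_num) (sub_nonpos.mpr hchsh)

theorem ch_le [StarModule ℝ R]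
    (T : IsCHSHTuple (2 * p₀ - 1) (2 * p₁ - 1) (2 * q₀ - 1) (2 * q₁ - 1)) :
    p₀ * q₀ + p₀ * q₁ + p₁ * q₀ - p₁ * q₁ ≤ p₀ + q₀ + ((√2 - 1) / 2) • (1 : R) := by
  have hchsh := tsirelson_inequality _ _ _ _ T
  have hconst : (1 / 4 : ℝ) • (√2 ^ 3 • (1 : R) - 2) = ((√2 - 1) / 2) • 1 := by
    have hsqrt : √2 ^ 3 = 2 * √2 := by rw [pow_succ, Real.sq_sqrt zero_le_two]
    rw [hsqrt, ← one_add_one_eq_two (R := R)]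
    module
  rw [← sub_le_iff_le_add', ch_eq_smul_chsh, ← hconst]
  gcongr

end CHSH

section Projection

theorem isStarProjection_diagonal {n K : Type*} [Fintype n] [DecidableEq n] [Semiring K]
    [StarRing K] {v : n → K} (hv : ∀ i, v i = 0 ∨ v i = 1) : IsStarProjection (diagonal v) := by
  constructor
  · rw [IsIdempotentElem, diagonal_mul_diagonal]
    congr with i
    rcases hv i with h | h <;> simp only [h, mul_zero, mul_one]
  · rw [IsSelfAdjoint, star_eq_conjTranspose, diagonal_conjTranspose]
    congr with i
    rcases hv i with h | h <;> simp only [Pi.star_apply, h, star_zero, star_one]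

theorem isStarProjection_kronecker {m n K : Type*} [Fintype m] [Fintype n] [CommSemiring K]
    [StarRing K] {P : Matrix m m K} {Q : Matrix n n K} (hP : IsStarProjection P)
    (hQ : IsStarProjection Q) : IsStarProjection (P ⊗ₖ Q) where
  isIdempotentElem := by
    rw [IsIdempotentElem, ← mul_kronecker_mul, hP.isIdempotentElem.eq, hQ.isIdempotentElem.eq]
  isSelfAdjoint := by
    rw [IsSelfAdjoint, star_eq_conjTranspose, conjTranspose_kronecker, ← star_eq_conjTranspose,
      ← star_eq_conjTranspose, hP.isSelfAdjoint.star_eq, hQ.isSelfAdjoint.star_eq]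

theorem commute_kronecker_one_one_kronecker {m n K : Type*} [Fintype m] [Fintype n] [DecidableEq m]
    [DecidableEq n] [CommSemiring K] (A : Matrix m m K) (B : Matrix n n K) :
    Commute (A ⊗ₖ (1 : Matrix n n K)) ((1 : Matrix m m K) ⊗ₖ B) := by
  simp only [Commute, SemiconjBy, ← mul_kronecker_mul, mul_one, one_mul]

theorem commute_of_isIdempotentElem_of_trace_ne_one {K : Type*} [CommRing K] [IsDomain K]
    {P : Matrix (Fin 2) (Fin 2) K} (hP : IsIdempotentElem P) (htr : P.trace ≠ 1)
    (Q : Matrix (Fin 2) (Fin 2) K) : Commute P Q := by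
  have entry (i j) : P i 0 * P 0 j + P i 1 * P 1 j = P i j := by
    simpa only [mul_apply, Fin.sum_univ_two] using congrFun₂ hP.eq i j
  have htr : P 0 0 + P 1 1 - 1 ≠ 0 := by rwa [← trace_fin_two, sub_ne_zero]
  have h₀₁ : P 0 1 = 0 := by
    refine (mul_eq_zero.mp ?_).resolve_right htr
    linear_combination entry 0 1
  have h₁₀ : P 1 0 = 0 := by
    refine (mul_eq_zero.mp ?_).resolve_right htr
    linear_combination entry 1 0
  have hdiag : P 0 0 - P 1 1 = 0 := by
    refine (mul_eq_zero.mp ?_).resolve_right htr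
    linear_combination entry 0 0 - entry 1 1
  have hscalar : P = P 0 0 • 1 := by
    ext i j
    fin_cases i <;> fin_cases j <;> simp [h₀₁, h₁₀, sub_eq_zero.mp hdiag]
  rw [hscalar]
  exact (Commute.one_left Q).smul_left _

end Projection

section POVM

variable {d : ℕ} {A : Matrix (Fin d) (Fin d) ℂ}

theorem IsPOVMElem.eigenvalues_mem_Icc (hA : IsPOVMElem A) (hH : A.IsHermitian) (i : Fin d) :
    hH.eigenvalues i ∈ Set.Icc 0 1 := by
  refine ⟨hA.1.eigenvalues_nonneg i, ?_⟩
  have hmem : 1 - hH.eigenvalues i ∈ spectrum ℝ (1 - A) := by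
    rw [← map_one (algebraMap ℝ (Matrix (Fin d) (Fin d) ℂ)), ← spectrum.singleton_sub_eq]
    exact Set.sub_mem_sub rfl (hH.eigenvalues_mem_spectrum_real i)
  exact sub_nonneg.mp (spectrum_nonneg_of_nonneg hA.2.nonneg hmem)

theorem IsPOVMElem.mem_convexHull_isStarProjection (hA : IsPOVMElem A) :
    A ∈ convexHull ℝ {P : Matrix (Fin d) (Fin d) ℂ | IsStarProjection P} := by
  have hH := hA.1.isHermitian
  let U := Unitary.conjStarAlgAut ℂ _ hH.eigenvectorUnitary
  let diag : (Fin d → ℝ) →ₗ[ℝ] Matrix (Fin d) (Fin d) ℂ :=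
    (U.toAlgEquiv.toLinearMap ∘ₗ diagonalLinearMap (Fin d) ℂ ℂ).restrictScalars ℝ ∘ₗ
      Complex.ofRealCLM.toLinearMap.compLeft (Fin d)
  have hdiag : diag '' Set.univ.pi (fun _ => {0, 1}) ⊆ {P | IsStarProjection P} := by
    rintro _ ⟨v, hv, rfl⟩
    refine (isStarProjection_diagonal fun i => ?_).map U
    simpa using hv i trivial
  have heig : hH.eigenvalues ∈ convexHull ℝ (Set.univ.pi fun _ : Fin d => ({0, 1} : Set ℝ)) := by
    rw [convexHull_pi]
    intro i _
    rw [convexHull_pair, segment_eq_Icc zero_le_one]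
    exact hA.eigenvalues_mem_Icc hH i
  have hspec : A = diag hH.eigenvalues := hH.spectral_theorem
  rw [hspec]
  refine convexHull_mono hdiag ?_
  rw [← diag.image_convexHull]
  exact Set.mem_image_of_mem diag heig

theorem IsPOVMElem.prodMk_mem_of_convex {B : Matrix (Fin d) (Fin d) ℂ} (hA : IsPOVMElem A)
    (hB : IsPOVMElem B) {s : Set (Matrix (Fin d) (Fin d) ℂ × Matrix (Fin d) (Fin d) ℂ)}
    (hs : Convex ℝ s) (h : ∀ P Q, IsStarProjection P → IsStarProjection Q → (P, Q) ∈ s) :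
    (A, B) ∈ s := by
  have hmem : (A, B) ∈ convexHull ℝ ({P | IsStarProjection P} ×ˢ {Q | IsStarProjection Q}) := by
    rw [convexHull_prod]
    exact ⟨hA.mem_convexHull_isStarProjection, hB.mem_convexHull_isStarProjection⟩
  exact convexHull_min (fun _ hP => h _ _ hP.1 hP.2) hs hmem

end POVM

section Expectation

variable {n : Type*} [Fintype n] [DecidableEq n]

/-- The expectation value `Re tr(ρ X)` of the operator `X` in the state `ρ`, as a real-linear
functional of `X`. -/
noncomputable def expectation (ρ : Matrix n n ℂ) : Matrix n n ℂ →ₗ[ℝ] ℝ :=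
  Complex.reLm ∘ₗ (traceLinearMap n ℂ ℂ ∘ₗ LinearMap.mulLeft ℂ ρ).restrictScalars ℝ

theorem expectation_apply (ρ X : Matrix n n ℂ) : expectation ρ X = (ρ * X).trace.re := rfl

variable {ρ : Matrix n n ℂ}

theorem expectation_nonneg (hρ : ρ.PosSemidef) {X : Matrix n n ℂ} (hX : 0 ≤ X) :
    0 ≤ expectation ρ X := by
  obtain ⟨C, rfl⟩ := CStarAlgebra.nonneg_iff_eq_star_mul_self.mp hρ.nonneg
  rw [expectation_apply, mul_assoc, trace_mul_comm]
  exact (Complex.nonneg_iff.mp (hX.posSemidef.mul_mul_conjTranspose_same C).trace_nonneg).1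

theorem expectation_mono (hρ : ρ.PosSemidef) : Monotone (expectation ρ) := fun X Y hXY => by
  simpa only [map_sub, sub_nonneg] using expectation_nonneg hρ (sub_nonneg.mpr hXY)

theorem expectation_one (hρ : ρ.trace = 1) : expectation ρ 1 = 1 := by
  rw [expectation_apply, mul_one, hρ, Complex.one_re]

end Expectation

section BellValue

variable {d : ℕ} {τ : ℝ} {ρ : Matrix (Fin d × Fin d) (Fin d × Fin d) ℂ}
  {A₀ A₁ B₀ B₁ : Matrix (Fin d) (Fin d) ℂ}

theorem tiltedCHBell_eq_expectation (τ : ℝ) (ρ : Matrix (Fin d × Fin d) (Fin d × Fin d) ℂ)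
    (A₀ A₁ B₀ B₁ : Matrix (Fin d) (Fin d) ℂ) :
    tiltedCHBell τ ρ A₀ A₁ B₀ B₁ =
      expectation ρ (A₀ ⊗ₖ B₀ + A₀ ⊗ₖ B₁ + A₁ ⊗ₖ B₀ - A₁ ⊗ₖ B₁)
        - τ * expectation ρ (A₀ ⊗ₖ 1) - τ * expectation ρ (1 ⊗ₖ B₀) :=
  rfl

theorem convex_setOf_tiltedCHBell_nonpos_left (τ : ℝ)
    (ρ : Matrix (Fin d × Fin d) (Fin d × Fin d) ℂ) (B₀ B₁ : Matrix (Fin d) (Fin d) ℂ) :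
    Convex ℝ {A : Matrix (Fin d) (Fin d) ℂ × Matrix (Fin d) (Fin d) ℂ |
      tiltedCHBell τ ρ A.1 A.2 B₀ B₁ ≤ 0} := by
  intro A hA A' hA' s t hs ht hst
  have haffine : tiltedCHBell τ ρ (s • A + t • A').1 (s • A + t • A').2 B₀ B₁ =
      s * tiltedCHBell τ ρ A.1 A.2 B₀ B₁ + t * tiltedCHBell τ ρ A'.1 A'.2 B₀ B₁ := by
    simp only [tiltedCHBell_eq_expectation, Prod.fst_add, Prod.snd_add, Prod.smul_fst,
      Prod.smul_snd, add_kronecker, smul_kronecker, map_add, map_sub, map_smul, smul_eq_mul]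
    linear_combination τ * expectation ρ (1 ⊗ₖ B₀) * hst
  rw [Set.mem_ofPred_eq, haffine]
  exact add_nonpos (mul_nonpos_of_nonneg_of_nonpos hs hA) (mul_nonpos_of_nonneg_of_nonpos ht hA')

theorem convex_setOf_tiltedCHBell_nonpos_right (τ : ℝ)
    (ρ : Matrix (Fin d × Fin d) (Fin d × Fin d) ℂ) (A₀ A₁ : Matrix (Fin d) (Fin d) ℂ) :
    Convex ℝ {B : Matrix (Fin d) (Fin d) ℂ × Matrix (Fin d) (Fin d) ℂ |
      tiltedCHBell τ ρ A₀ A₁ B.1 B.2 ≤ 0} := by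
  intro B hB B' hB' s t hs ht hst
  have haffine : tiltedCHBell τ ρ A₀ A₁ (s • B + t • B').1 (s • B + t • B').2 =
      s * tiltedCHBell τ ρ A₀ A₁ B.1 B.2 + t * tiltedCHBell τ ρ A₀ A₁ B'.1 B'.2 := by
    simp only [tiltedCHBell_eq_expectation, Prod.fst_add, Prod.snd_add, Prod.smul_fst,
      Prod.smul_snd, kronecker_add, kronecker_smul, map_add, map_sub, map_smul, smul_eq_mul]
    linear_combination τ * expectation ρ (A₀ ⊗ₖ 1) * hst
  rw [Set.mem_ofPred_eq, haffine]
  exact add_nonpos (mul_nonpos_of_nonneg_of_nonpos hs hB) (mul_nonpos_of_nonneg_of_nonpos ht hB')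

theorem tiltedCHBell_nonpos_of_forall_isStarProjection
    (h : ∀ P₀ P₁ Q₀ Q₁ : Matrix (Fin d) (Fin d) ℂ, IsStarProjection P₀ → IsStarProjection P₁ →
      IsStarProjection Q₀ → IsStarProjection Q₁ → tiltedCHBell τ ρ P₀ P₁ Q₀ Q₁ ≤ 0)
    (hA₀ : IsPOVMElem A₀) (hA₁ : IsPOVMElem A₁) (hB₀ : IsPOVMElem B₀) (hB₁ : IsPOVMElem B₁) :
    tiltedCHBell τ ρ A₀ A₁ B₀ B₁ ≤ 0 := by
  have bob {P₀ P₁} (hP₀ : IsStarProjection P₀) (hP₁ : IsStarProjection P₁) :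
      tiltedCHBell τ ρ P₀ P₁ B₀ B₁ ≤ 0 :=
    Set.mem_ofPred.mp <| hB₀.prodMk_mem_of_convex hB₁
      (convex_setOf_tiltedCHBell_nonpos_right τ ρ P₀ P₁) fun Q₀ Q₁ hQ₀ hQ₁ =>
        h P₀ P₁ Q₀ Q₁ hP₀ hP₁ hQ₀ hQ₁
  exact Set.mem_ofPred.mp <| hA₀.prodMk_mem_of_convex hA₁
    (convex_setOf_tiltedCHBell_nonpos_left τ ρ B₀ B₁) fun P₀ P₁ hP₀ hP₁ => bob hP₀ hP₁

theorem isCHSHTuple_kronecker (hA₀ : IsStarProjection A₀) (hA₁ : IsStarProjection A₁)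
    (hB₀ : IsStarProjection B₀) (hB₁ : IsStarProjection B₁) :
    IsCHSHTuple (2 * A₀ ⊗ₖ (1 : Matrix (Fin d) (Fin d) ℂ) - 1) (2 * A₁ ⊗ₖ 1 - 1)
      (2 * (1 : Matrix (Fin d) (Fin d) ℂ) ⊗ₖ B₀ - 1) (2 * 1 ⊗ₖ B₁ - 1) :=
  isCHSHTuple_two_mul_sub_one
    (isStarProjection_kronecker hA₀ (.one _)) (isStarProjection_kronecker hA₁ (.one _))
    (isStarProjection_kronecker (.one _) hB₀) (isStarProjection_kronecker (.one _) hB₁)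
    (commute_kronecker_one_one_kronecker _ _) (commute_kronecker_one_one_kronecker _ _)
    (commute_kronecker_one_one_kronecker _ _) (commute_kronecker_one_one_kronecker _ _)

theorem tiltedCHBell_nonpos_of_commute_s9 (hτ : 1 ≤ τ) (hρ : ρ.PosSemidef)
    (hA₀ : IsStarProjection A₀) (hA₁ : IsStarProjection A₁) (hB₀ : IsStarProjection B₀)
    (hB₁ : IsStarProjection B₁) (h : Commute A₀ A₁ ∨ Commute B₀ B₁) :
    tiltedCHBell τ ρ A₀ A₁ B₀ B₁ ≤ 0 := by
  have hlift : Commute (A₀ ⊗ₖ (1 : Matrix (Fin d) (Fin d) ℂ)) (A₁ ⊗ₖ 1) ∨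
      Commute ((1 : Matrix (Fin d) (Fin d) ℂ) ⊗ₖ B₀) (1 ⊗ₖ B₁) := by
    simp only [Commute, SemiconjBy, ← mul_kronecker_mul, mul_one]
    exact h.imp (congrArg (· ⊗ₖ 1)) (congrArg (1 ⊗ₖ ·))
  have hle := expectation_mono hρ (ch_le_of_commute (isCHSHTuple_kronecker hA₀ hA₁ hB₀ hB₁) hlift)
  simp only [← mul_kronecker_mul, mul_one, one_mul, map_add (expectation ρ) (A₀ ⊗ₖ 1)] at hle
  have hA : 0 ≤ expectation ρ (A₀ ⊗ₖ 1) :=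
    expectation_nonneg hρ (isStarProjection_kronecker hA₀ (.one _)).nonneg
  have hB : 0 ≤ expectation ρ (1 ⊗ₖ B₀) :=
    expectation_nonneg hρ (isStarProjection_kronecker (.one _) hB₀).nonneg
  calc tiltedCHBell τ ρ A₀ A₁ B₀ B₁
      ≤ (1 - τ) * (expectation ρ (A₀ ⊗ₖ 1) + expectation ρ (1 ⊗ₖ B₀)) := by
        rw [tiltedCHBell_eq_expectation]
        linarith
    _ ≤ 0 := mul_nonpos_of_nonpos_of_nonneg (sub_nonpos.mpr hτ) (add_nonneg hA hB)

theorem tiltedCHBell_le_of_expectation_eq_half (hρ : IsDensityMatrix ρ)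
    (hA₀ : IsStarProjection A₀) (hA₁ : IsStarProjection A₁) (hB₀ : IsStarProjection B₀)
    (hB₁ : IsStarProjection B₁) (hA : expectation ρ (A₀ ⊗ₖ 1) = 1 / 2)
    (hB : expectation ρ (1 ⊗ₖ B₀) = 1 / 2) :
    tiltedCHBell τ ρ A₀ A₁ B₀ B₁ ≤ 1 / 2 + 1 / √2 - τ := by
  have hle := expectation_mono hρ.1 (ch_le (isCHSHTuple_kronecker hA₀ hA₁ hB₀ hB₁))
  simp only [← mul_kronecker_mul, mul_one, one_mul] at hle
  rw [map_add, map_add, map_smul, expectation_one hρ.2, hA, hB, smul_eq_mul, mul_one] at hle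
  rw [tiltedCHBell_eq_expectation, hA, hB, one_div √2, ← Real.sqrt_div_self]
  linarith

end BellValue

section MaximallyMixed

/-- `ρ` is a state on `ℂ^d ⊗ ℂ^d` both of whose reduced states are the maximally mixed state
`1 / d`. This is expressed through the expectation values of local operators, which determine the
partial traces. -/
structure HasMaximallyMixedMarginals {d : ℕ}
    (ρ : Matrix (Fin d × Fin d) (Fin d × Fin d) ℂ) : Prop where
  isDensityMatrix : IsDensityMatrix ρ
  left : ∀ A : Matrix (Fin d) (Fin d) ℂ, (ρ * (A ⊗ₖ 1)).trace = A.trace / d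
  right : ∀ B : Matrix (Fin d) (Fin d) ℂ, (ρ * (1 ⊗ₖ B)).trace = B.trace / d

theorem trace_maxEntState_mul_kronecker {d : ℕ} (A B : Matrix (Fin d) (Fin d) ℂ) :
    (maxEntState d * (A ⊗ₖ B)).trace = (A * Bᵀ).trace / d := by
  have hsqrt : (1 / √d : ℂ) * (1 / √d) = 1 / d := by
    rw [div_mul_div_comm, one_mul, ← Complex.ofReal_mul, Real.mul_self_sqrt d.cast_nonneg,
      Complex.ofReal_natCast]
  calc (maxEntState d * (A ⊗ₖ B)).trace
      = ∑ j, ∑ i, (1 / √d : ℂ) * (1 / √d) * (A i j * B i j) := by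
        rw [maxEntState, vecMulVec_mul, trace_vecMulVec]
        simp [dotProduct, vecMul, maxEntVec, Fintype.sum_prod_type, apply_ite, Finset.mul_sum,
          mul_assoc]
    _ = (A * Bᵀ).trace / d := by
        rw [Finset.sum_comm]
        simp only [hsqrt, Finset.sum_div, one_div_mul_eq_div, trace, diag_apply, mul_apply,
          transpose_apply]

theorem hasMaximallyMixedMarginals_maxEntState (d : ℕ) [NeZero d] :
    HasMaximallyMixedMarginals (maxEntState d) where
  isDensityMatrix := by
    refine ⟨posSemidef_vecMulVec_self_star _, ?_⟩
    have := trace_maxEntState_mul_kronecker (1 : Matrix (Fin d) (Fin d) ℂ) 1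
    simpa [NeZero.ne d] using this
  left A := by rw [trace_maxEntState_mul_kronecker, transpose_one, mul_one]
  right B := by rw [trace_maxEntState_mul_kronecker, one_mul, trace_transpose]

theorem schmidtState_pi_div_four : schmidtState (Real.pi / 4) = maxEntState 2 := by
  have hvec : schmidtVec (Real.pi / 4) = maxEntVec 2 := by
    ext ⟨i, j⟩
    fin_cases i <;> fin_cases j <;>
      simp [schmidtVec, maxEntVec, ← Complex.ofReal_inv, ← Real.sqrt_div_self]
  rw [schmidtState, maxEntState, hvec]

theorem maxEnt_qubit_no_violation_general {τ : ℝ} (hτ : 1 / 2 + 1 / Real.sqrt 2 ≤ τ)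
    {ρ : Matrix (Fin 2 × Fin 2) (Fin 2 × Fin 2) ℂ} (hρ : HasMaximallyMixedMarginals ρ)
    {A₀ A₁ B₀ B₁ : Matrix (Fin 2) (Fin 2) ℂ} (hA₀ : IsPOVMElem A₀) (hA₁ : IsPOVMElem A₁)
    (hB₀ : IsPOVMElem B₀) (hB₁ : IsPOVMElem B₁) : tiltedCHBell τ ρ A₀ A₁ B₀ B₁ ≤ 0 := by
  refine tiltedCHBell_nonpos_of_forall_isStarProjection (fun P₀ P₁ Q₀ Q₁ hP₀ hP₁ hQ₀ hQ₁ => ?_)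
    hA₀ hA₁ hB₀ hB₁
  by_cases hcomm : Commute P₀ P₁ ∨ Commute Q₀ Q₁
  · have one_le : 1 ≤ τ := by
      have hsqrt : 1 / 2 ≤ 1 / √2 := by gcongr; exact Real.sqrt_le_self_iff.mpr (.inr one_le_two)
      linarith
    exact tiltedCHBell_nonpos_of_commute_s9 one_le hρ.isDensityMatrix.1 hP₀ hP₁ hQ₀ hQ₁ hcomm
  · obtain ⟨hP, hQ⟩ := not_or.mp hcomm
    have trP : P₀.trace = 1 := of_not_not fun h =>
      hP (commute_of_isIdempotentElem_of_trace_ne_one hP₀.isIdempotentElem h P₁)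
    have trQ : Q₀.trace = 1 := of_not_not fun h =>
      hQ (commute_of_isIdempotentElem_of_trace_ne_one hQ₀.isIdempotentElem h Q₁)
    have expP : expectation ρ (P₀ ⊗ₖ 1) = 1 / 2 := by
      simp [expectation_apply, hρ.left, trP]
    have expQ : expectation ρ (1 ⊗ₖ Q₀) = 1 / 2 := by
      simp [expectation_apply, hρ.right, trQ]
    exact (tiltedCHBell_le_of_expectation_eq_half hρ.isDensityMatrix hP₀ hP₁ hQ₀ hQ₁ expP
      expQ).trans (sub_nonpos.mpr hτ)

end MaximallyMixed

/-- for `τ ≥ 1/2 + 1/√2`, the two-qubit maximally entangled state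
`|ψ^{π/4}⟩` does not violate the tilted-CH inequality for any POVM elements. -/
theorem maxEnt_qubit_no_violation
    (τ : ℝ) (hτ : 1 / 2 + 1 / Real.sqrt 2 ≤ τ)
    (A0 A1 B0 B1 : Matrix (Fin 2) (Fin 2) ℂ)
    (hA0 : IsPOVMElem A0) (hA1 : IsPOVMElem A1)
    (hB0 : IsPOVMElem B0) (hB1 : IsPOVMElem B1) :
    tiltedCHBell τ (schmidtState (Real.pi / 4)) A0 A1 B0 B1 ≤ 0 :=
  maxEnt_qubit_no_violation_general hτ
    (schmidtState_pi_div_four ▸ hasMaximallyMixedMarginals_maxEntState 2) hA0 hA1 hB0 hB1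
end
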